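/- arXiv:2409.02422 — 2 statements merged into one kernel-verified Lean document; each statement's English description precedes it below -/
import Mathlib

section
/- (Newton's formula for gl(m|n)) As Laurent series in T with coefficients in Z(U(gl(m|n))): C_{m|n}(T−(m−n)) / C_{m|n}(T−(m−n)+1) = 1 − Σ_{k=0}^∞ G_k^{gl(m|n)} T^{−1−k}. -/
set_option maxHeartbeats 1000000
set_option synthInstance.maxHeartbeats 400000

noncomputable section
open scoped TensorProduct

/-- The index set `I = {1,…,m,1̄,…,n̄}` of `gl(m|n)`; `Sum.inl` are the even
(unbarred) indices, `Sum.inr` the odd (barred) ones.  The index set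
`Î = {0} ∪ I` of `gl(m+1|n)` is realized as `Ind (m+1) n`, with `0 = Sum.inl 0`. -/
abbrev Ind (m n : ℕ) := Fin m ⊕ Fin n

/-- Parity of an index, as `0` or `1`. -/
def pI {m n : ℕ} : Ind m n → ℕ := Sum.elim (fun _ => 0) (fun _ => 1)

/-- The total order `1 < ⋯ < m < 1̄ < ⋯ < n̄` on `I` (and, with `m+1` in place of `m`,
the order `0 < 1 < ⋯ < m < 1̄ < ⋯ < n̄` on `Î`). -/
def iltI {m n : ℕ} : Ind m n → Ind m n → Prop
  | Sum.inl a, Sum.inl b => a < b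
  | Sum.inl _, Sum.inr _ => True
  | Sum.inr _, Sum.inl _ => False
  | Sum.inr a, Sum.inr b => a < b

/-- The distinguished index `0` of `Î`. -/
def z0 {m n : ℕ} : Ind (m+1) n := Sum.inl 0

/-- The inclusion `I ↪ Î`. -/
def emb {m n : ℕ} : Ind m n → Ind (m+1) n := Sum.map Fin.succ id

lemma emb_injective {m n : ℕ} : Function.Injective (emb (m := m) (n := n)) := by
  intro a b h
  cases a <;> cases b <;> simp [emb, Fin.succ_inj] at h <;> simp [h]

lemma emb_ne_z0 {m n : ℕ} (a : Ind m n) : emb a ≠ z0 := by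
  cases a <;> simp [emb, z0, Fin.succ_ne_zero]

/-- Builds a linear map out of a space with basis `α` from a function on basis vectors. -/
def mkOp {α M : Type} [AddCommGroup M] [Module ℂ M] (g : α → M) : (α →₀ ℂ) →ₗ[ℂ] M :=
  Finsupp.lsum ℂ fun x => LinearMap.toSpanSingleton ℂ M (g x)

/-- Number of odd variables occurring before position `i`. -/
def cntB {n : ℕ} (b : Fin n → Bool) (i : Fin n) : ℕ :=
  (Finset.univ.filter fun j => j < i ∧ b j = true).card

/-- Number of odd variables occurring. -/
def cntA {n : ℕ} (b : Fin n → Bool) : ℕ := (Finset.univ.filter fun j => b j = true).card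


/-- The defining (super-)commutation relations of `gl`:
`e_ij e_kl − (−1)^{(|i|+|j|)(|k|+|l|)} e_kl e_ij = δ_jk e_il − (−1)^{(|i|+|j|)(|k|+|l|)} δ_li e_kj`. -/
inductive glRel (ι : Type) (p : ι → ℕ) [DecidableEq ι] :
    FreeAlgebra ℂ (ι × ι) → FreeAlgebra ℂ (ι × ι) → Prop
  | basic (i j k l : ι) : glRel ι p
      (FreeAlgebra.ι ℂ (i, j) * FreeAlgebra.ι ℂ (k, l)
        - ((-1 : ℂ) ^ ((p i + p j) * (p k + p l))) •
            (FreeAlgebra.ι ℂ (k, l) * FreeAlgebra.ι ℂ (i, j)))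
      ((if j = k then FreeAlgebra.ι ℂ (i, l) else 0)
        - ((-1 : ℂ) ^ ((p i + p j) * (p k + p l))) •
            (if l = i then FreeAlgebra.ι ℂ (k, j) else 0))

/-- The universal enveloping superalgebra of the general linear Lie superalgebra with
index set `ι` and parity `p`, presented by generators `e_ij` and the super-commutator
relations. -/
abbrev UEA (ι : Type) (p : ι → ℕ) [DecidableEq ι] : Type := RingQuot (glRel ι p)

/-- The generator `e_ij` of `UEA ι p`. -/
def gen {ι : Type} (p : ι → ℕ) [DecidableEq ι] (i j : ι) : UEA ι p :=
  RingQuot.mkAlgHom ℂ (glRel ι p) (FreeAlgebra.ι ℂ (i, j))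

/-- The chain `a, v_1, …, v_k, b`. -/
def chainF {ι : Type} (a b : ι) {k : ℕ} (v : Fin k → ι) : Fin (k+2) → ι :=
  Fin.cons a (Fin.snoc v b)

/-- The elements `r_k(a,b) = Σ (−1)^{|i_1|+⋯+|i_{k-1}|} e_{a i_1} e_{i_1 i_2} ⋯ e_{i_{k-1} b}`,
with `r_0(a,b) = δ_{ab}(−1)^{|a||b|}`. -/
def rElt {ι A : Type} [Fintype ι] [DecidableEq ι] [Ring A] [Algebra ℂ A]
    (e : ι → ι → A) (p : ι → ℕ) : ℕ → ι → ι → A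
  | 0 => fun a b => if a = b then ((-1 : ℂ) ^ (p a * p b)) • (1 : A) else 0
  | (k+1) => fun a b => ∑ v : Fin k → ι, ((-1 : ℂ) ^ (∑ t, p (v t))) •
      (List.ofFn fun t : Fin (k+1) =>
        e (chainF a b v t.castSucc) (chainF a b v t.succ)).prod

/-- The Gelfand invariants `G_k = Σ_i r_k(i,i)` (for `k ≥ 1`). -/
def gelf {ι A : Type} [Fintype ι] [DecidableEq ι] [Ring A] [Algebra ℂ A]
    (e : ι → ι → A) (p : ι → ℕ) (k : ℕ) : A :=
  ∑ i : ι, rElt e p k i i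

/-- The algebra of Laurent-type series in `T` with coefficients in `A`: Hahn series over `ℤ`,
where the exponent `k` records the power `T^{-k}` (so that supports of honest Laurent series
in `T^{-1}`, with finitely many positive powers of `T`, are well-ordered). -/
abbrev TSer (A : Type) [Ring A] := HahnSeries ℤ A

/-- The variable `T`. -/
def Tv {A : Type} [Ring A] : TSer A := HahnSeries.single (-1 : ℤ) (1 : A)

/-- The matrix `𝔈 = ((−1)^{|i|} e_{ij})_{i,j∈I}` with entries in `A`, as a matrix of constant
series. -/
def scrE (m n : ℕ) {A : Type} [Ring A] [Algebra ℂ A] (e : Ind m n → Ind m n → A) :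
    Matrix (Ind m n) (Ind m n) (TSer A) :=
  fun i j => HahnSeries.C (((-1 : ℂ) ^ (pI i)) • e i j)

/-- The Capelli Berezinian
`C_{m|n}(v) = Det[(𝔈−v−i+1)_{ij}]_{i,j≤m} ⬝ Det[((𝔈−v−m+i)^{−1})^{st}_{ij}]_{m<i,j≤m+n}`
of the matrix `E`, evaluated at the series `v`.  Here `Det` denotes the column determinant
`Σ_σ sgn(σ) X_{σ(1),1}⋯X_{σ(N),N}`, matrix inverses are taken in the matrix ring over the
Laurent series algebra (via `Ring.inverse`), and the supertransposition signs
`(−1)^{|i|(|j|+1)}` are equal to `1` on the odd-odd block. -/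
def capelli {m n : ℕ} {A : Type} [Ring A] [Algebra ℂ A]
    (E : Matrix (Ind m n) (Ind m n) (TSer A)) (v : TSer A) : TSer A :=
  (∑ σ : Equiv.Perm (Fin m), ((Equiv.Perm.sign σ : ℤˣ) : ℤ) •
      (List.ofFn fun t : Fin m =>
        E (Sum.inl (σ t)) (Sum.inl t)
          - (if σ t = t then v + (((t : ℕ) : ℂ) • 1) else 0)).prod)
  * (∑ τ : Equiv.Perm (Fin n), ((Equiv.Perm.sign τ : ℤˣ) : ℤ) •
      (List.ofFn fun t : Fin n =>
        (Ring.inverse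
          (E - (v + ((((m : ℂ) - ((t : ℕ) : ℂ)) - 1) • 1)) •
            (1 : Matrix (Ind m n) (Ind m n) (TSer A))))
          (Sum.inr t) (Sum.inr (τ t))).prod)

/-- The series `Σ_{k=0}^∞ G_k T^{−1−k}` of Gelfand invariants, with `G_0 = m−n`. -/
def GelSer (m n : ℕ) : TSer (UEA (Ind m n) pI) :=
  (HahnSeries.ofPowerSeries ℤ (UEA (Ind m n) pI)
    (PowerSeries.mk fun k => match k with
      | 0 => ((m : ℤ) - n) • (1 : UEA (Ind m n) pI)
      | (k+1) => gelf (gen pI) pI (k+1))) * HahnSeries.single (1 : ℤ) 1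


section NewtonRTT
variable {R : Type} [Ring R] {ι : Type} [Fintype ι] [DecidableEq ι]

/-- twisted gl relations -/
def IsGl (p : ι → ℕ) (E : Matrix ι ι R) : Prop :=
  ∀ i j k l, E i j * E k l = (-1 : ℤ) ^ ((p i + p j) * (p k + p l)) • (E k l * E i j)
    + (if j = k then (-1 : ℤ) ^ p k • E i l else 0)
    - (if l = i then (-1 : ℤ) ^ ((p i + p j) * (p k + p l) + p i) • E k j else 0)

/-- diagonal sign matrix -/
def sgM (R : Type) [Ring R] (p : ι → ℕ) (q : ℕ) : Matrix ι ι R :=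
  Matrix.diagonal fun i => (((-1 : ℤ) ^ (q * p i) : ℤ) : R)

lemma sgM_sq (p : ι → ℕ) (q : ℕ) : sgM R p q * sgM R p q = 1 := by
  simp only [sgM, Matrix.diagonal_mul_diagonal, ← Int.cast_mul, ← pow_add, ← two_mul]
  ext i j
  simp [Matrix.diagonal_apply, Matrix.one_apply, pow_mul]

lemma sgM_apply (p : ι → ℕ) (q : ℕ) (M : Matrix ι ι R) (i j : ι) :
    (sgM R p q * M * sgM R p q) i j = (-1 : ℤ) ^ (q * (p i + p j)) • M i j := by
  simp only [sgM, Matrix.mul_diagonal, Matrix.diagonal_mul, mul_add, pow_add]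
  rw [← zsmul_eq_mul, ← zsmul_eq_mul', smul_smul, mul_comm]

lemma EP {p : ι → ℕ} (hp : ∀ i, p i = 0 ∨ p i = 1) {E : Matrix ι ι R} (hE : IsGl p E)
    {u : R} (hu : ∀ r, u * r = r * u) {P : Matrix ι ι R}
    (h1 : (E + Matrix.diagonal fun _ => u) * P = 1)
    (h2 : P * (E + Matrix.diagonal fun _ => u) = 1) (k l i j : ι) :
    E k l * P i j = (-1 : ℤ) ^ ((p k + p l) * (p i + p j)) • (P i j * E k l)
      + (if i = l then (-1 : ℤ) ^ (p l) • P k j else 0)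
      - (if k = j then (-1 : ℤ) ^ (p l + (p k + p l) * (p i + p l)) • P i l else 0) := by
  set L := E + Matrix.diagonal fun _ => u with hL
  set q := p k + p l with hq
  set D := sgM R p q with hD
  have hDD : D * D = 1 := sgM_sq p q
  set X : Matrix ι ι R := Matrix.diagonal fun _ => E k l with hX
  set S : Matrix ι ι R := Matrix.single l k 1 with hS
  have hSM : ∀ (M : Matrix ι ι R) a b, (S * M) a b = if a = l then M k b else 0 := by
    intro M a b
    by_cases h : a = l
    · subst h; simp [hS]
    · simp [hS, h, Matrix.single_mul_apply_of_ne]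
  have hMS : ∀ (M : Matrix ι ι R) a b, (M * S) a b = if b = k then M a l else 0 := by
    intro M a b
    by_cases h : b = k
    · subst h; simp [hS]
    · simp [hS, h, Matrix.mul_single_apply_of_ne]
  have key : X * L = D * L * D * X + ((-1 : ℤ) ^ p l • (S * L) - (-1 : ℤ) ^ p k • (D * (L * S) * D)) := by
    ext a b
    have e1 := hE k l a b
    simp only [Matrix.add_apply, Matrix.sub_apply, Matrix.smul_apply, hX, Matrix.diagonal_mul,
      Matrix.mul_diagonal, hD, sgM_apply]
    rw [hSM, hMS]
    simp only [hL, Matrix.add_apply, Matrix.diagonal_apply, mul_add, e1]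
    have hc := hu (E k l)
    clear e1 hMS hSM hDD h1 h2
    clear_value X S D L q
    clear hX hS hD hL
    subst hq
    by_cases hab : a = b
    · subst hab
      by_cases h3 : l = a <;> by_cases h4 : k = a
      · subst h3; subst h4
        rcases hp k with hk | hk <;> simp [add_mul, mul_add, hk, hc]
      · subst h3
        rcases hp k with hk | hk <;> rcases hp l with hl | hl <;>
          simp [add_mul, mul_add, hk, hl, hc, h4, Ne.symm h4] <;> abel
      · subst h4
        rcases hp k with hk | hk <;> rcases hp l with hl | hl <;>
          simp [add_mul, mul_add, hk, hl, hc, h3, Ne.symm h3] <;> abel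
      · rcases hp k with hk | hk <;> rcases hp l with hl | hl <;> rcases hp a with ha | ha <;>
          simp [add_mul, hk, hl, ha, hc, h3, Ne.symm h3, h4, Ne.symm h4]
    · by_cases h3 : l = a <;> by_cases h4 : k = b
      · subst h3; subst h4
        rcases hp k with hk | hk <;> rcases hp l with hl | hl <;>
          simp [add_mul, hk, hl, hab, Ne.symm hab] <;> abel
      · subst h3
        rcases hp k with hk | hk <;> rcases hp l with hl | hl <;> rcases hp b with hb | hb <;>
          simp [add_mul, hk, hl, hb, hab, h4, Ne.symm h4]
      · subst h4
        rcases hp k with hk | hk <;> rcases hp l with hl | hl <;> rcases hp a with hb | hb <;>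
          simp [add_mul, hk, hl, hb, hab, h3, Ne.symm h3] <;> abel
      · rcases hp k with hk | hk <;> rcases hp l with hl | hl <;> rcases hp a with ha | ha <;>
        rcases hp b with hb | hb <;>
          simp [add_mul, hk, hl, ha, hb, hab, h3, Ne.symm h3, h4, Ne.symm h4]
  have key2 : X * P = D * P * D * X - ((-1 : ℤ) ^ p l • (D * P * D * S) - (-1 : ℤ) ^ p k • (D * S * D * P)) := by
    have e2 : (D * P * D) * (X * L) * P = (D * P * D) * X := by
      rw [mul_assoc, mul_assoc X, h1, mul_one]
    have e3 : D * P * D * (D * L * D) = 1 := by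
      calc _ = D * P * (D * D) * L * D := by noncomm_ring
        _ = D * (P * L) * D := by rw [hDD]; noncomm_ring
        _ = 1 := by rw [h2]; simp [hDD]
    have e4 : D * P * D * (D * (L * S) * D) * P = D * S * D * P := by
      calc _ = D * P * (D * D) * L * S * D * P := by noncomm_ring
        _ = D * (P * L) * S * D * P := by rw [hDD]; noncomm_ring
        _ = _ := by rw [h2]; simp
    have e5 : D * P * D * (S * L) * P = D * P * D * S := by
      rw [mul_assoc, mul_assoc S, h1, mul_one]
    rw [← e2, key, mul_add, ← mul_assoc (D * P * D) (D * L * D) X, mul_sub, mul_smul_comm, mul_smul_comm, add_mul, sub_mul,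
      smul_mul_assoc, smul_mul_assoc, e4, e5]
    rw [show D * P * D * (D * L * D) * X = X by rw [e3, one_mul]]
    abel
  have := congrFun (congrFun key2 i) j
  have e6 : (D * S * D) = (-1 : ℤ) ^ q • S := by
    ext a b
    rw [hD, sgM_apply, Matrix.smul_apply, hS, Matrix.single_apply]
    split_ifs with h
    · obtain ⟨rfl, rfl⟩ := h
      congr 1
      rw [hq]
      rcases hp l with hk | hk <;> rcases hp k with hl | hl <;> simp [hk, hl]
    · simp
  simp only [Matrix.add_apply, Matrix.sub_apply, Matrix.smul_apply, hX, Matrix.diagonal_mul,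
      Matrix.mul_diagonal, e6, smul_mul_assoc, hMS, hSM] at this
  simp only [hD, sgM_apply, smul_mul_assoc] at this
  rw [this]
  have s1 : (-1 : ℤ) ^ p k * (-1) ^ q = (-1) ^ p l := by
    rw [hq]
    rcases hp l with hk | hk <;> rcases hp k with hl | hl <;> simp [hk, hl]
  by_cases h3 : i = l <;> by_cases h4 : k = j
  · rw [if_pos h3, if_pos h3, if_pos h4, if_pos h4.symm]
    simp only [smul_smul, s1, pow_add]; exact sub_sub_eq_add_sub _ _ _
  · rw [if_pos h3, if_pos h3, if_neg h4, if_neg (Ne.symm h4)]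
    simp only [smul_smul, s1]; simp
  · rw [if_neg h3, if_neg h3, if_pos h4, if_pos h4.symm]
    simp only [smul_smul, pow_add]; simp
  · rw [if_neg h3, if_neg h3, if_neg h4, if_neg (Ne.symm h4)]
    simp

lemma PP {p : ι → ℕ} (hp : ∀ i, p i = 0 ∨ p i = 1) {E : Matrix ι ι R} (hE : IsGl p E)
    {u v : R} (hu : ∀ r, u * r = r * u) (hv : ∀ r, v * r = r * v) {P Q : Matrix ι ι R}
    (h1 : (E + Matrix.diagonal fun _ => u) * P = 1)
    (h2 : P * (E + Matrix.diagonal fun _ => u) = 1)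
    (h3 : (E + Matrix.diagonal fun _ => v) * Q = 1)
    (h4 : Q * (E + Matrix.diagonal fun _ => v) = 1) (k l i j : ι) :
    P k l * Q i j = (-1 : ℤ) ^ ((p i + p j) * (p k + p l)) • (Q i j * P k l)
      - (-1 : ℤ) ^ (p i * p j + (p i + p j) * p l) •
        ((P * Q) k j * P i l - P k j * (Q * P) i l) := by
  set L := E + Matrix.diagonal fun _ => u with hL
  set r := p i + p j with hr
  set D := sgM R p r with hD
  have hDD : D * D = 1 := sgM_sq p r
  set X : Matrix ι ι R := Matrix.diagonal fun _ => Q i j with hX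
  set S : Matrix ι ι R := Matrix.single j i 1 with hS
  have hSM : ∀ (M : Matrix ι ι R) a b, (S * M) a b = if a = j then M i b else 0 := by
    intro M a b
    by_cases h : a = j
    · subst h; simp [hS]
    · simp [hS, h, Matrix.single_mul_apply_of_ne]
  have hMS : ∀ (M : Matrix ι ι R) a b, (M * S) a b = if b = i then M a j else 0 := by
    intro M a b
    by_cases h : b = i
    · subst h; simp [hS]
    · simp [hS, h, Matrix.mul_single_apply_of_ne]
  have hMD : ∀ (M : Matrix ι ι R) a b, (M * D) a b = (-1 : ℤ) ^ (r * p b) • M a b := by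
    intro M a b
    rw [hD, sgM, Matrix.mul_diagonal, ← zsmul_eq_mul']
  have hDMD : ∀ (P : Matrix ι ι R) a b, (D * P * D) a b = (-1 : ℤ) ^ (r * (p a + p b)) • P a b := by
    intro P a b; rw [hD, sgM_apply]
  have key : L * X = X * (D * L * D) +
      ((-1 : ℤ) ^ p i • (Q * S) - (-1 : ℤ) ^ (p i * p j) • (S * Q * D)) := by
    ext a b
    have e1 := EP hp hE hv h3 h4 a b i j
    simp only [Matrix.add_apply, Matrix.sub_apply, Matrix.smul_apply, hX, Matrix.diagonal_mul,
      Matrix.mul_diagonal, hDMD, hMS]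
    simp only [hMD, hSM]
    simp only [hL, Matrix.add_apply, Matrix.diagonal_apply]
    have t1 : (if a = b then u else 0) * Q i j
        = (-1 : ℤ) ^ (r * (p a + p b)) • (Q i j * if a = b then u else 0) := by
      by_cases h : a = b
      · subst h
        rw [if_pos rfl, ← two_mul, hu, mul_left_comm, pow_mul _ 2]
        simp
      · simp [h]
    have t2 : (if i = b then (-1 : ℤ) ^ p b • Q a j else 0)
        = (-1 : ℤ) ^ p i • if b = i then Q a j else 0 := by
      by_cases h : i = b
      · subst h; simp
      · simp [h, Ne.symm h]
    have t3 : (if a = j then (-1 : ℤ) ^ (p b + (p a + p b) * (p i + p b)) • Q i b else 0)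
        = (-1 : ℤ) ^ (p i * p j) • (-1 : ℤ) ^ (r * p b) • if a = j then Q i b else 0 := by
      by_cases h : a = j
      · subst h
        simp only [if_true, smul_smul]
        congr 1
        rw [hr]
        rcases hp a with hk | hk <;> rcases hp b with hl | hl <;> rcases hp i with hi | hi <;>
          simp [hk, hl, hi]
      · simp [h]
    rw [t2, t3, mul_comm _ (p i + p j)] at e1
    rw [add_mul, e1, t1, mul_smul_comm, mul_add (Q i j), smul_add]
    abel
  have e3 : D * L * D * (D * P * D) = 1 := by
    calc _ = D * L * (D * D) * P * D := by noncomm_ring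
      _ = D * (L * P) * D := by rw [hDD]; noncomm_ring
      _ = 1 := by rw [h1]; simp [hDD]
  have e2 : P * (L * X) * (D * P * D) = X * (D * P * D) := by
    rw [← mul_assoc P, h2, one_mul]
  have key2 : P * X = X * (D * P * D) -
      ((-1 : ℤ) ^ p i • (P * Q * S * (D * P * D)) - (-1 : ℤ) ^ (p i * p j) • (P * S * (Q * P) * D)) := by
    rw [← e2, key, mul_add, add_mul, mul_sub, sub_mul, mul_smul_comm, mul_smul_comm,
      smul_mul_assoc, smul_mul_assoc,
      show P * (X * (D * L * D)) * (D * P * D) = P * X * (D * L * D * (D * P * D)) by noncomm_ring,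
      e3, show P * (S * Q * D) * (D * P * D) = P * S * Q * (D * D) * P * D by noncomm_ring, hDD,
      show P * S * Q * 1 * P * D = P * S * (Q * P) * D by noncomm_ring,
      show P * (Q * S) * (D * P * D) = P * Q * S * (D * P * D) by noncomm_ring]
    simp
  have := congrFun (congrFun key2 k) l
  have f1 : ∀ (M N : Matrix ι ι R) a b, (M * S * N) a b = M a j * N i b := by
    intro M N a b
    rw [mul_assoc, Matrix.mul_apply]
    simp [hSM]
  simp only [Matrix.sub_apply, Matrix.smul_apply, hX, Matrix.diagonal_mul,
      Matrix.mul_diagonal, f1, hDMD] at this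
  simp only [hMD, f1] at this
  rw [this]
  have s1 : (-1 : ℤ) ^ p i * (-1) ^ (r * (p i + p l)) = (-1) ^ (p i * p j + r * p l) := by
    rw [hr]
    rcases hp i with hk | hk <;> rcases hp j with hl | hl <;> rcases hp l with hi | hi <;>
      simp [hk, hl, hi]
  simp only [mul_smul_comm, smul_smul, s1, smul_sub, pow_add]

/-- supertrace -/
def strM (p : ι → ℕ) (M : Matrix ι ι R) : R := ∑ i, (-1 : ℤ) ^ p i • M i i

lemma comm_inv {L P : Matrix ι ι R} (h1 : L * P = 1) (h2 : P * L = 1) {x : R}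
    (hx : ∀ i j, x * L i j = L i j * x) (i j : ι) : x * P i j = P i j * x := by
  set X : Matrix ι ι R := Matrix.diagonal fun _ => x with hX
  have e : X * L = L * X := by
    ext a b; simp [hX, hx]
  have e2 : X * P = P * X := by
    calc X * P = P * L * X * P := by rw [h2, one_mul]
      _ = P * (L * X) * P := by noncomm_ring
      _ = P * X * (L * P) := by rw [← e]; noncomm_ring
      _ = _ := by rw [h1, mul_one]
  simpa [hX] using congrFun (congrFun e2 i) j

lemma str_comm {p : ι → ℕ} (hp : ∀ i, p i = 0 ∨ p i = 1) {E : Matrix ι ι R} (hE : IsGl p E)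
    {u : R} (hu : ∀ r, u * r = r * u) {P : Matrix ι ι R}
    (h1 : (E + Matrix.diagonal fun _ => u) * P = 1)
    (h2 : P * (E + Matrix.diagonal fun _ => u) = 1) (k l : ι) :
    strM p P * E k l = E k l * strM p P := by
  rw [strM, Finset.mul_sum, Finset.sum_mul]
  simp only [mul_smul_comm, EP hp hE hu h1 h2, smul_sub, smul_add, Finset.sum_sub_distrib,
    Finset.sum_add_distrib, smul_mul_assoc]
  simp only [← two_mul, smul_ite, smul_zero, Finset.sum_ite_eq', Finset.sum_ite_eq, Finset.mem_univ,
    if_true, smul_smul]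
  have : ∀ i, (-1 : ℤ) ^ p i * (-1) ^ ((p k + p l) * (2 * p i)) = (-1) ^ p i := by
    intro i
    rw [mul_left_comm, pow_mul _ 2]; simp
  simp only [this]
  have s2 : (-1 : ℤ) ^ p l * (-1) ^ p l = (-1) ^ p k * (-1) ^ (p l + (p k + p l) * (p k + p l)) := by
    rcases hp k with hk | hk <;> rcases hp l with hl | hl <;> simp [hk, hl]
  rw [s2]; simp

lemma rtt_step {p : ι → ℕ} (hp : ∀ i, p i = 0 ∨ p i = 1) {E : Matrix ι ι R} (hE : IsGl p E)
    {u v : R} (hu : ∀ r, u * r = r * u) (hv : ∀ r, v * r = r * v) {P Q : Matrix ι ι R}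
    (h1 : (E + Matrix.diagonal fun _ => u) * P = 1)
    (h2 : P * (E + Matrix.diagonal fun _ => u) = 1)
    (h3 : (E + Matrix.diagonal fun _ => v) * Q = 1)
    (h4 : Q * (E + Matrix.diagonal fun _ => v) = 1) (a : ι)
    (huv : u = v + (-1 : ℤ) ^ p a • 1) (d : R) (hd : P a a * d = 1) :
    Q a a * (1 + strM p P - ∑ i, (-1 : ℤ) ^ p i • (P i a * d * P a i))
      = (1 + strM p Q) * P a a := by
  have hs : ∀ x : R, (-1 : ℤ) ^ p a • (-1 : ℤ) ^ p a • x = x := by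
    intro x; rw [smul_smul, ← pow_add, ← two_mul, pow_mul]; simp
  have hLL : (E + Matrix.diagonal fun _ => u) =
      (E + Matrix.diagonal fun _ => v) + (-1 : ℤ) ^ p a • (1 : Matrix ι ι R) := by
    rw [huv]
    ext i j
    by_cases h : i = j
    · subst h
      simp only [Matrix.add_apply, Matrix.smul_apply, Matrix.diagonal_apply_eq, Matrix.one_apply_eq,
        add_assoc]
    · simp only [Matrix.add_apply, Matrix.smul_apply, Matrix.diagonal_apply_ne _ h,
        Matrix.one_apply_ne h, smul_zero, add_zero]
  have r1 : (-1 : ℤ) ^ p a • (Q * P) = Q - P := by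
    calc _ = Q * ((-1 : ℤ) ^ p a • (1 : Matrix ι ι R)) * P := by rw [mul_smul_comm, mul_one, smul_mul_assoc]
      _ = Q * ((E + Matrix.diagonal fun _ => u) - (E + Matrix.diagonal fun _ => v)) * P := by
          rw [hLL, add_sub_cancel_left]
      _ = Q * ((E + Matrix.diagonal fun _ => u) * P) - Q * (E + Matrix.diagonal fun _ => v) * P := by
          noncomm_ring
      _ = _ := by rw [h1, h4]; simp
  have r2 : (-1 : ℤ) ^ p a • (P * Q) = Q - P := by
    calc _ = P * ((-1 : ℤ) ^ p a • (1 : Matrix ι ι R)) * Q := by rw [mul_smul_comm, mul_one, smul_mul_assoc]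
      _ = P * ((E + Matrix.diagonal fun _ => u) - (E + Matrix.diagonal fun _ => v)) * Q := by
          rw [hLL, add_sub_cancel_left]
      _ = P * (E + Matrix.diagonal fun _ => u) * Q - P * ((E + Matrix.diagonal fun _ => v) * Q) := by
          noncomm_ring
      _ = _ := by rw [h2, h3]; simp
  have r1' : ∀ i j, (-1 : ℤ) ^ p a • (Q * P) i j = Q i j - P i j := by
    intro i j; rw [← Matrix.smul_apply, r1, Matrix.sub_apply]
  have r2' : ∀ i j, (-1 : ℤ) ^ p a • (P * Q) i j = Q i j - P i j := by
    intro i j; rw [← Matrix.smul_apply, r2, Matrix.sub_apply]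
  have c1 : ∀ i, Q a a * P i a = Q i a * P a a := by
    intro i
    have := PP hp hE hu hv h1 h2 h3 h4 i a a a
    have g1 : (-1 : ℤ) ^ ((p a + p a) * (p i + p a)) = 1 := by
      rw [← two_mul, mul_assoc, pow_mul]; simp
    have g2 : (-1 : ℤ) ^ (p a * p a + (p a + p a) * p a) = (-1) ^ p a := by
      rcases hp a with h | h <;> simp [h]
    rw [g1, g2, one_smul, smul_sub, ← smul_mul_assoc, ← mul_smul_comm, r1', r2', sub_mul,
      mul_sub] at this
    have h5 : Q a a * P i a - Q i a * P a a = 0 := by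
      calc _ = (Q a a * P i a - (Q i a * P a a - P i a * P a a - (P i a * Q a a - P i a * P a a)))
            - P i a * Q a a := by abel
        _ = 0 := by rw [← this, sub_self]
    exact sub_eq_zero.mp h5
  have c2 : ∀ i, (-1 : ℤ) ^ p i • (Q i a * P a i) = (-1 : ℤ) ^ p a • (P a i * Q i a) +
      ((-1 : ℤ) ^ p i • P i i) * Q a a - ((-1 : ℤ) ^ p i • Q i i) * P a a := by
    intro i
    have := PP hp hE hv hu h3 h4 h1 h2 i a a i
    have g1 : (-1 : ℤ) ^ ((p a + p i) * (p i + p a)) = (-1) ^ p i * (-1) ^ p a := by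
      rcases hp a with h | h <;> rcases hp i with h' | h' <;> simp [h, h']
    have g2 : (-1 : ℤ) ^ (p a * p i + (p a + p i) * p a) = (-1) ^ p a := by
      rcases hp a with h | h <;> rcases hp i with h' | h' <;> simp [h, h']
    have g3 : (-1 : ℤ) ^ p i * ((-1) ^ p i * (-1) ^ p a) = (-1) ^ p a := by
      rcases hp i with h' | h' <;> simp [h']
    rw [g1, g2, smul_sub, ← smul_mul_assoc _ ((Q * P) i i), ← mul_smul_comm _ (Q i i), r1', r2',
      sub_mul, mul_sub] at this
    rw [this, smul_sub, smul_smul, g3, smul_mul_assoc, smul_mul_assoc]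
    rw [show Q i i * Q a a - P i i * Q a a - (Q i i * Q a a - Q i i * P a a)
      = Q i i * P a a - P i i * Q a a by abel, smul_sub]
    abel
  have c3 : Q a a * ∑ i, (-1 : ℤ) ^ p i • (P i a * d * P a i) =
      (Q a a - P a a) + strM p P * Q a a - strM p Q * P a a := by
    rw [Finset.mul_sum, strM, strM, Finset.sum_mul, Finset.sum_mul, ← r2', Matrix.mul_apply,
      Finset.smul_sum, ← Finset.sum_add_distrib, ← Finset.sum_sub_distrib]
    refine Finset.sum_congr rfl fun i _ => ?_
    rw [← c2, mul_smul_comm, ← mul_assoc, ← mul_assoc, c1, mul_assoc (Q i a), hd, mul_one]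
  have c4 : strM p P * Q a a = Q a a * strM p P := by
    refine comm_inv h3 h4 ?_ a a
    intro i j
    simp only [Matrix.add_apply, Matrix.diagonal_apply, mul_add, add_mul,
      str_comm hp hE hu h1 h2 i j]
    by_cases h : i = j
    · simp [h, hv]
    · simp [h]
  rw [mul_sub, c3, c4, mul_add, add_mul, mul_one, one_mul]
  abel

end NewtonRTT


section NewtonDet
variable {R : Type} [Ring R] {ι : Type}

/-- sign of a self-map -/
def epsF {k : ℕ} (f : Fin k → Fin k) : ℤ :=
  Matrix.det ((1 : Matrix (Fin k) (Fin k) ℤ).submatrix f id)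

lemma epsF_perm {k : ℕ} (σ : Equiv.Perm (Fin k)) : epsF σ = ((Equiv.Perm.sign σ : ℤˣ) : ℤ) := by
  rw [epsF, Matrix.det_permute]; simp

lemma epsF_comp {k : ℕ} (f : Fin k → Fin k) (σ : Equiv.Perm (Fin k)) :
    epsF (f ∘ σ) = ((Equiv.Perm.sign σ : ℤˣ) : ℤ) * epsF f := by
  have := Matrix.det_permute σ ((1 : Matrix (Fin k) (Fin k) ℤ).submatrix f id)
  rw [Matrix.submatrix_submatrix] at this
  simpa [epsF] using this

lemma epsF_ninj {k : ℕ} (f : Fin k → Fin k) (i j : Fin k) (h : i ≠ j) (hf : f i = f j) :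
    epsF f = 0 :=
  Matrix.det_zero_of_row_eq h (by ext x; rw [Matrix.submatrix_apply, Matrix.submatrix_apply, hf])

lemma epsF_snoc {k : ℕ} (h : Fin k → Fin k) :
    epsF (Fin.snoc (α := fun _ => Fin (k+1)) (fun t => (h t).castSucc) (Fin.last k)) = epsF h := by
  rw [epsF, Matrix.det_succ_row _ (Fin.last k), Finset.sum_eq_single (Fin.last k)]
  · simp only [Matrix.submatrix_apply, Fin.snoc_last, id, Matrix.one_apply_eq, mul_one, ← two_mul,
      pow_mul, Matrix.submatrix_submatrix]
    simp only [neg_one_sq, one_pow, one_mul, epsF, Fin.succAbove_last]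
    refine (congrArg (· * _) (?_ : _ = (1:ℤ))).trans ((one_mul _).trans (congrArg (Matrix.det (R := ℤ) (n := Fin k)) ?_))
    · simp [Matrix.one_apply]
    ext i j
    simp [Matrix.one_apply]
  · intro b _ hb
    simp [Matrix.one_apply, Ne.symm hb]
  · simp

lemma epsF_cons {k : ℕ} (h : Fin k → Fin k) :
    epsF (Fin.cons (α := fun _ => Fin (k+1)) 0 (fun t => (h t).succ)) = epsF h := by
  rw [epsF, Matrix.det_succ_row_zero, Finset.sum_eq_single 0]
  · simp only [Matrix.submatrix_apply, Fin.cons_zero, id, Matrix.one_apply_eq, mul_one,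
      Matrix.submatrix_submatrix]
    simp only [epsF, Fin.val_zero, pow_zero, one_mul, Fin.succAbove_zero]
    refine (congrArg (· * _) (?_ : _ = (1:ℤ))).trans ((one_mul _).trans (congrArg (Matrix.det (R := ℤ) (n := Fin k)) ?_))
    · simp [Matrix.one_apply]
    ext i j
    simp [Matrix.one_apply]
  · intro b _ hb
    simp [Matrix.one_apply, Ne.symm hb]
  · simp

/-- column determinant over all maps -/
def qdF {k : ℕ} (Y : Fin k → Fin k → ι → R) (c : Fin k → ι) : R :=
  ∑ f : Fin k → Fin k, epsF f • (List.ofFn fun t => Y t (f t) (c t)).prod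

lemma qdF_perm {k : ℕ} (Y : Fin k → Fin k → ι → R) (c : Fin k → ι) :
    ∑ σ : Equiv.Perm (Fin k), ((Equiv.Perm.sign σ : ℤˣ) : ℤ) •
      (List.ofFn fun t => Y t (σ t) (c t)).prod = qdF Y c := by
  refine Fintype.sum_of_injective (fun σ : Equiv.Perm (Fin k) => (σ : Fin k → Fin k))
    DFunLike.coe_injective _ _ ?_ ?_
  · intro f hf
    by_cases hi : Function.Injective f
    · exact absurd ⟨Equiv.ofBijective f (Finite.injective_iff_bijective.mp hi), rfl⟩ hf
    · simp only [Function.Injective, not_forall] at hi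
      obtain ⟨i, j, h1, h2⟩ := hi
      rw [epsF_ninj f i j h2 h1, zero_smul]
  · intro σ
    rw [epsF_perm]

lemma prod_split (N : ℕ) (t : Fin N) (r : Fin (N+1) → R) : ∃ A B : R, ∀ g : Fin (N+1) → R,
    (∀ i, i ≠ t.castSucc → i ≠ t.succ → g i = r i) →
    (List.ofFn g).prod = A * (g t.castSucc * g t.succ) * B := by
  induction N with
  | zero => exact t.elim0
  | succ N ih =>
    refine Fin.cases ?_ (fun t => ?_) t
    · refine ⟨1, (List.ofFn fun i : Fin N => r i.succ.succ).prod, fun g hg => ?_⟩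
      rw [List.ofFn_succ, List.ofFn_succ, List.prod_cons, List.prod_cons]
      have : (fun i : Fin N => g i.succ.succ) = fun i => r i.succ.succ := by
        ext i
        apply hg
        · simp [Fin.ext_iff]
        · simp [Fin.ext_iff]
      rw [this]
      simp [mul_assoc]
    · obtain ⟨A, B, h⟩ := ih t (fun i => r i.succ)
      refine ⟨r 0 * A, B, fun g hg => ?_⟩
      rw [List.ofFn_succ, List.prod_cons, h (fun i => g i.succ), hg 0]
      · simp [mul_assoc]
      · simp [Fin.ext_iff]
      · simp [Fin.ext_iff]
      · intro i h1 h2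
        apply hg
        · rw [Fin.castSucc_succ, Ne, Fin.succ_inj]; exact h1
        · rw [Ne, Fin.succ_inj]; exact h2

lemma qdF_adj {k : ℕ} (h2 : ∀ x : R, x + x = 0 → x = 0) (Y : Fin (k+1) → Fin (k+1) → ι → R)
    (hR : ∀ (t : Fin k) a b j l, Y t.castSucc a j * Y t.succ b l - Y t.castSucc b j * Y t.succ a l
      + Y t.castSucc a l * Y t.succ b j - Y t.castSucc b l * Y t.succ a j = 0)
    (c : Fin (k+1) → ι) (t : Fin k) :
    qdF Y (c ∘ Equiv.swap t.castSucc t.succ) = - qdF Y c := by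
  set s := Equiv.swap t.castSucc t.succ with hs
  have hne : t.castSucc ≠ t.succ := by simp [Fin.ext_iff]
  have hsg : ((Equiv.Perm.sign s : ℤˣ) : ℤ) = -1 := by
    rw [hs, Equiv.Perm.sign_swap hne]; simp
  have re : ∀ c, qdF Y c = ∑ f : Fin (k+1) → Fin (k+1), -(epsF f •
      (List.ofFn fun t => Y t ((f ∘ s) t) (c t)).prod) := by
    intro c
    rw [qdF]
    refine Fintype.sum_equiv (Equiv.arrowCongr s (Equiv.refl _)) _ _ ?_
    intro f
    have e : (Equiv.arrowCongr s (Equiv.refl _)) f = f ∘ s := by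
      ext x; simp [Equiv.arrowCongr, hs]
    have e2 : (f ∘ s) ∘ s = f := by
      ext x; simp [hs]
    rw [e, e2, epsF_comp, hsg]
    simp
  have : qdF Y (c ∘ s) + qdF Y c = 0 := by
    apply h2
    have e1 := re c
    have e2 := re (c ∘ s)
    calc _ = (qdF Y (c ∘ s) + qdF Y (c ∘ s)) + (qdF Y c + qdF Y c) := by abel
      _ = 0 := ?_
    nth_rw 2 [e1]
    nth_rw 2 [e2]
    rw [qdF, qdF, ← Finset.sum_add_distrib, ← Finset.sum_add_distrib, ← Finset.sum_add_distrib]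
    refine Finset.sum_eq_zero fun f _ => ?_
    rw [← smul_neg, ← smul_neg, ← smul_add, ← smul_add, ← smul_add]
    obtain ⟨A, B, hAB⟩ := prod_split k t (fun i => Y i (f i) (c i))
    have hsi : ∀ i, i ≠ t.castSucc → i ≠ t.succ → s i = i := fun i h1 h2 =>
      Equiv.swap_apply_of_ne_of_ne h1 h2
    have s1 : s t.castSucc = t.succ := Equiv.swap_apply_left _ _
    have s2 : s t.succ = t.castSucc := Equiv.swap_apply_right _ _
    rw [hAB _ (fun i h1 h2 => by simp [hsi i h1 h2]), hAB _ (fun i h1 h2 => by simp [hsi i h1 h2]),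
      hAB _ (fun i h1 h2 => by simp), hAB _ (fun i h1 h2 => by simp [hsi i h1 h2])]
    simp only [Function.comp, s1, s2]
    have := hR t (f t.castSucc) (f t.succ) (c t.castSucc) (c t.succ)
    have e3 : ∀ x y z w : R, A * x * B + -(A * y * B) + (A * z * B + -(A * w * B)) =
        A * (z - w + x - y) * B := by intros; noncomm_ring
    rw [e3, this]
    simp
  exact eq_neg_of_add_eq_zero_left this

lemma qdF_anti {k : ℕ} (h2 : ∀ x : R, x + x = 0 → x = 0) (Y : Fin (k+1) → Fin (k+1) → ι → R)
    (hR : ∀ (t : Fin k) a b j l, Y t.castSucc a j * Y t.succ b l - Y t.castSucc b j * Y t.succ a l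
      + Y t.castSucc a l * Y t.succ b j - Y t.castSucc b l * Y t.succ a j = 0)
    (σ : Equiv.Perm (Fin (k+1))) (c : Fin (k+1) → ι) :
    qdF Y (c ∘ σ) = ((Equiv.Perm.sign σ : ℤˣ) : ℤ) • qdF Y c := by
  have hm : σ ∈ Submonoid.closure
      (Set.range fun i : Fin k ↦ Equiv.swap i.castSucc i.succ) := by
    rw [Equiv.Perm.mclosure_swap_castSucc_succ]; trivial
  induction hm using Submonoid.closure_induction generalizing c with
  | mem x hx =>
    obtain ⟨t, rfl⟩ := hx
    have hne : t.castSucc ≠ t.succ := by simp [Fin.ext_iff]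
    simp only
    rw [qdF_adj h2 Y hR, Equiv.Perm.sign_swap hne]; simp
  | one => simp
  | mul x y _ _ hx hy =>
    rw [Equiv.Perm.coe_mul, ← Function.comp_assoc, hy, hx, smul_smul]
    simp [mul_comm]

lemma qdF_zero {k : ℕ} (h2 : ∀ x : R, x + x = 0 → x = 0) (Y : Fin (k+1) → Fin (k+1) → ι → R)
    (hR : ∀ (t : Fin k) a b j l, Y t.castSucc a j * Y t.succ b l - Y t.castSucc b j * Y t.succ a l
      + Y t.castSucc a l * Y t.succ b j - Y t.castSucc b l * Y t.succ a j = 0)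
    (c : Fin (k+1) → ι) (i j : Fin (k+1)) (hij : i ≠ j) (hc : c i = c j) : qdF Y c = 0 := by
  have := qdF_anti h2 Y hR (Equiv.swap i j) c
  have e : c ∘ Equiv.swap i j = c := by
    ext x
    simp only [Function.comp, Equiv.swap_apply_def]
    split_ifs with h h' <;> simp_all
  rw [e, Equiv.Perm.sign_swap hij] at this
  apply h2
  nth_rw 1 [this]
  simp

/-- right minor vector -/
def minR {k : ℕ} (Y : Fin (k+1) → Fin (k+1) → ι → R) (c : Fin k → ι) (i : Fin (k+1)) : R :=
  ∑ g : Fin k → Fin (k+1), epsF (Fin.snoc (α := fun _ => Fin (k+1)) g i) •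
    (List.ofFn fun t : Fin k => Y t.castSucc (g t) (c t)).prod

/-- left minor vector -/
def minL {k : ℕ} (Y : Fin (k+1) → Fin (k+1) → ι → R) (c : Fin k → ι) (i : Fin (k+1)) : R :=
  ∑ g : Fin k → Fin (k+1), epsF (Fin.cons (α := fun _ => Fin (k+1)) i g) •
    (List.ofFn fun t : Fin k => Y t.succ (g t) (c t)).prod

lemma qdF_snoc {k : ℕ} (Y : Fin (k+1) → Fin (k+1) → ι → R) (c : Fin k → ι) (j : ι) :
    qdF Y (Fin.snoc (α := fun _ => ι) c j) = ∑ i, minR Y c i * Y (Fin.last k) i j := by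
  rw [qdF, ← (Fin.snocEquiv fun _ => Fin (k+1)).sum_comp, Fintype.sum_prod_type]
  refine Finset.sum_congr rfl fun i _ => ?_
  rw [minR, Finset.sum_mul]
  refine Finset.sum_congr rfl fun g _ => ?_
  rw [List.ofFn_succ', List.concat_eq_append, List.prod_append]
  rw [smul_mul_assoc]
  simp only [List.prod_cons, List.prod_nil, mul_one, Fin.snocEquiv, Equiv.coe_fn_mk,
    Fin.snoc_castSucc, Fin.snoc_last]

lemma qdF_cons {k : ℕ} (Y : Fin (k+1) → Fin (k+1) → ι → R) (c : Fin k → ι) (j : ι) :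
    qdF Y (Fin.cons (α := fun _ => ι) j c) = ∑ i, Y 0 i j * minL Y c i := by
  rw [qdF, ← (Fin.consEquiv fun _ => Fin (k+1)).sum_comp, Fintype.sum_prod_type]
  refine Finset.sum_congr rfl fun i _ => ?_
  rw [minL, Finset.mul_sum]
  refine Finset.sum_congr rfl fun g _ => ?_
  rw [List.ofFn_succ, List.prod_cons]
  rw [mul_smul_comm]
  simp only [Fin.consEquiv, Equiv.coe_fn_mk, Fin.cons_zero, Fin.cons_succ]

lemma minR_last {k : ℕ} (Y : Fin (k+1) → Fin (k+1) → ι → R) (c : Fin k → ι) :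
    minR Y c (Fin.last k) = qdF (fun t i j => Y t.castSucc i.castSucc j) c := by
  symm
  refine Fintype.sum_of_injective (fun (h : Fin k → Fin k) t => (h t).castSucc) ?_ _ _ ?_ ?_
  · intro f g h
    ext t
    simpa [Fin.ext_iff] using congrFun h t
  · intro g hg
    have : ∃ t, g t = Fin.last k := by
      by_contra hcon
      push Not at hcon
      exact hg ⟨fun t => (g t).castPred (hcon t), by ext; simp⟩
    obtain ⟨t, ht⟩ := this
    rw [epsF_ninj _ t.castSucc (Fin.last k) (Fin.castSucc_lt_last t).ne (by simp [ht]), zero_smul]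
  · intro h
    rw [epsF_snoc]

lemma minL_zero {k : ℕ} (Y : Fin (k+1) → Fin (k+1) → ι → R) (c : Fin k → ι) :
    minL Y c 0 = qdF (fun t i j => Y t.succ i.succ j) c := by
  symm
  refine Fintype.sum_of_injective (fun (h : Fin k → Fin k) t => (h t).succ) ?_ _ _ ?_ ?_
  · intro f g h
    ext t
    simpa [Fin.ext_iff] using congrFun h t
  · intro g hg
    have : ∃ t, g t = 0 := by
      by_contra hcon
      push Not at hcon
      exact hg ⟨fun t => (g t).pred (hcon t), by ext; simp⟩
    obtain ⟨t, ht⟩ := this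
    rw [epsF_ninj _ t.succ 0 (Fin.succ_ne_zero t) (by simp [ht]), zero_smul]
  · intro h
    rw [epsF_cons]

end NewtonDet


section NewtonInd

lemma schur_lem {R : Type} [Ring R] {k : ℕ} (L' P' : Matrix (Fin (k+1)) (Fin (k+1)) R)
    (P : Matrix (Fin k) (Fin k) R) (h1 : L' * P' = 1) (h2 : P' * L' = 1)
    (h3 : L'.submatrix Fin.castSucc Fin.castSucc * P = 1)
    (h4 : P * L'.submatrix Fin.castSucc Fin.castSucc = 1) :
    ∃ d : R, P' (Fin.last k) (Fin.last k) * d = 1 ∧ d * P' (Fin.last k) (Fin.last k) = 1 ∧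
      ∀ i j : Fin k, P i j = P' i.castSucc j.castSucc
        - P' i.castSucc (Fin.last k) * d * P' (Fin.last k) j.castSucc := by
  set f : Fin k → Fin (k+1) := Fin.castSucc with hf
  set g : Unit → Fin (k+1) := fun _ => Fin.last k with hg
  set a := L'.submatrix f f with ha
  set b := L'.submatrix f g with hb
  set c := L'.submatrix g f with hc
  set e := L'.submatrix g g with he
  set A := P'.submatrix f f with hA
  set B := P'.submatrix f g with hB
  set C := P'.submatrix g f with hC
  set y := P'.submatrix g g with hy
  have ev : ∀ (M M' : Matrix (Fin (k+1)) (Fin (k+1)) R), M * M' = 1 → ∀ i j,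
      ∑ t : Fin k, M i (f t) * M' (f t) j + M i (Fin.last k) * M' (Fin.last k) j
        = (1 : Matrix (Fin (k+1)) (Fin (k+1)) R) i j := by
    intro M M' h i j
    rw [← h, Matrix.mul_apply, Fin.sum_univ_castSucc]
  have q1 : a * A + b * C = 1 := by
    ext i j
    simpa [ha, hb, hc, he, hA, hB, hC, hy, hg, Matrix.mul_apply, Matrix.one_apply, hf] using ev _ _ h1 (f i) (f j)
  have q2 : a * B + b * y = 0 := by
    ext i j
    simpa [ha, hb, hc, he, hA, hB, hC, hy, hg, Matrix.mul_apply, Matrix.one_apply, hf, Fin.castSucc_ne_last] using ev _ _ h1 (f i) (g j)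
  have q3 : c * B + e * y = 1 := by
    ext i j
    simpa [ha, hb, hc, he, hA, hB, hC, hy, hg, Matrix.mul_apply, Matrix.one_apply] using ev _ _ h1 (g i) (g j)
  have q4 : C * a + y * c = 0 := by
    ext i j
    simpa [ha, hb, hc, he, hA, hB, hC, hy, hg, Matrix.mul_apply, Matrix.one_apply, hf, (Fin.castSucc_ne_last _).symm] using
      ev _ _ h2 (g i) (f j)
  have q5 : C * b + y * e = 1 := by
    ext i j
    simpa [ha, hb, hc, he, hA, hB, hC, hy, hg, Matrix.mul_apply, Matrix.one_apply] using ev _ _ h2 (g i) (g j)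
  have eB : B = - (P * (b * y)) := by
    have := congrArg (P * ·) q2
    simp only [Matrix.mul_add, ← Matrix.mul_assoc P a, h4, Matrix.one_mul, Matrix.mul_zero] at this
    exact eq_neg_of_add_eq_zero_left this
  have eC : C = - (y * c * P) := by
    have := congrArg (· * P) q4
    simp only [Matrix.add_mul, Matrix.mul_assoc C a, h3, Matrix.mul_one, Matrix.zero_mul] at this
    exact eq_neg_of_add_eq_zero_left this
  set d := e - c * P * b with hd
  have d1 : y * d = 1 := by
    rw [← q5, eC, hd, Matrix.mul_sub, Matrix.neg_mul]
    simp only [Matrix.mul_assoc]; abel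
  have d2 : d * y = 1 := by
    rw [← q3, eB, hd, Matrix.sub_mul, Matrix.mul_neg]
    simp only [Matrix.mul_assoc]; abel
  have eA : P = A - B * d * C := by
    have h5 : P = A + P * (b * C) := by
      have := congrArg (P * ·) q1
      simp only [Matrix.mul_add, ← Matrix.mul_assoc P a, h4, Matrix.one_mul, Matrix.mul_one] at this
      exact this.symm
    have h6 : B * d = - (P * b) := by
      rw [eB, Matrix.neg_mul, Matrix.mul_assoc, Matrix.mul_assoc, d1, Matrix.mul_one]
    rw [h6, Matrix.neg_mul, sub_neg_eq_add, Matrix.mul_assoc]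
    exact h5
  refine ⟨d () (), ?_, ?_, ?_⟩
  · have := congrFun (congrFun d1 ()) ()
    rw [Matrix.mul_apply] at this
    simp only [Finset.univ_unique, Finset.sum_singleton, Matrix.one_apply_eq] at this
    exact this
  · have := congrFun (congrFun d2 ()) ()
    rw [Matrix.mul_apply] at this
    simp only [Finset.univ_unique, Finset.sum_singleton, Matrix.one_apply_eq] at this
    exact this
  · intro i j
    have := congrFun (congrFun eA i) j
    rw [Matrix.sub_apply, Matrix.mul_apply] at this
    simp only [Finset.univ_unique, Finset.sum_singleton, Matrix.mul_apply] at this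
    exact this

/-- parity on naturals -/
def parN (m i : ℕ) : ℕ := if i < m then 0 else 1

lemma parN_or (m i : ℕ) : parN m i = 0 ∨ parN m i = 1 := by
  unfold parN; split_ifs <;> simp

/-- abstract context for the Newton identity -/
structure NCtx (R : Type) [Ring R] where
  N : ℕ
  m : ℕ
  hmN : m ≤ N
  E : ℕ → ℕ → R
  u : ℤ → R
  hu : ∀ c r, u c * r = r * u c
  hus : ∀ c, u (c + 1) = u c + 1
  gl : ∀ k ≤ N, IsGl (fun i : Fin k => parN m i) (Matrix.of fun i j : Fin k => E i j)
  P : ∀ k : ℕ, ℤ → Matrix (Fin k) (Fin k) R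
  h1 : ∀ k ≤ N, ∀ c, ((Matrix.of fun i j : Fin k => E i j) + Matrix.diagonal fun _ => u c) * P k c = 1
  h2 : ∀ k ≤ N, ∀ c, P k c * ((Matrix.of fun i j : Fin k => E i j) + Matrix.diagonal fun _ => u c) = 1
  two : ∀ x : R, x + x = 0 → x = 0

namespace NCtx
variable {R : Type} [Ring R] (X : NCtx R)

/-- L matrix -/
def L (k : ℕ) (c : ℤ) : Matrix (Fin k) (Fin k) R :=
  (Matrix.of fun i j : Fin k => X.E i j) + Matrix.diagonal fun _ => X.u c

/-- corner entry -/
def y (k : ℕ) (c : ℤ) : R := X.P (k+1) c (Fin.last k) (Fin.last k)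

/-- one plus supertrace -/
def z (k : ℕ) (c : ℤ) : R := 1 + strM (fun i : Fin k => parN X.m i) (X.P k c)

lemma L_apply (k : ℕ) (c : ℤ) (i j : Fin k) :
    X.L k c i j = X.E i j + if i = j then X.u c else 0 := by
  simp [L, Matrix.diagonal_apply]

lemma L_sub (k : ℕ) (c : ℤ) :
    (X.L (k+1) c).submatrix Fin.castSucc Fin.castSucc = X.L k c := by
  ext i j
  simp [L_apply]

lemma schur (k : ℕ) (hk : k < X.N) (c : ℤ) : ∃ d : R, X.y k c * d = 1 ∧ d * X.y k c = 1 ∧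
    X.z k c = 1 + strM (fun i : Fin (k+1) => parN X.m i) (X.P (k+1) c)
      - ∑ i : Fin (k+1), (-1 : ℤ) ^ parN X.m i •
        (X.P (k+1) c i (Fin.last k) * d * X.P (k+1) c (Fin.last k) i) := by
  obtain ⟨d, h1, h2, h3⟩ := schur_lem (X.L (k+1) c) (X.P (k+1) c) (X.P k c) (X.h1 _ hk c)
    (X.h2 _ hk c) (by rw [L_sub]; exact X.h1 _ hk.le c) (by rw [L_sub]; exact X.h2 _ hk.le c)
  refine ⟨d, h1, h2, ?_⟩
  rw [z, strM, strM, Fin.sum_univ_castSucc, Fin.sum_univ_castSucc, h1, one_mul]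
  simp only [h3, smul_sub, Finset.sum_sub_distrib, Fin.val_castSucc]
  abel

lemma step_even (k : ℕ) (hk : k < X.m) (c : ℤ) :
    X.y k c * X.z k (c+1) = X.z (k+1) c * X.y k (c+1) := by
  have hN : k < X.N := lt_of_lt_of_le hk X.hmN
  obtain ⟨d, e1, e2, e3⟩ := X.schur k hN (c+1)
  rw [e3]
  exact rtt_step (fun i => parN_or _ _) (X.gl (k+1) hN) (X.hu (c+1)) (X.hu c) (X.h1 _ hN _)
    (X.h2 _ hN _) (X.h1 _ hN _) (X.h2 _ hN _) (Fin.last k) (by simp [X.hus, parN, hk]) d e1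

lemma step_odd (k : ℕ) (hk : X.m ≤ k) (hN : k < X.N) (c : ℤ) :
    X.y k (c+1) * X.z k c = X.z (k+1) (c+1) * X.y k c := by
  obtain ⟨d, e1, e2, e3⟩ := X.schur k hN c
  rw [e3]
  exact rtt_step (fun i => parN_or _ _) (X.gl (k+1) hN) (X.hu c) (X.hu (c+1)) (X.h1 _ hN _)
    (X.h2 _ hN _) (X.h1 _ hN _) (X.h2 _ hN _) (Fin.last k) (by simp [X.hus, parN, hk.not_gt]) d e1

lemma z_comm (k : ℕ) (hk : k ≤ X.N) (c : ℤ) (i j : ℕ) (hi : i < k) (hj : j < k) :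
    Commute (X.z k c) (X.E i j) := by
  have := str_comm (fun i => parN_or _ _) (X.gl k hk) (X.hu c) (X.h1 _ hk c) (X.h2 _ hk c) ⟨i, hi⟩ ⟨j, hj⟩
  exact (Commute.one_left _).add_left this

lemma y_commE (k : ℕ) (hk : k < X.N) (c : ℤ) (i j : ℕ) (hi : i < k) (hj : j < k) :
    Commute (X.y k c) (X.E i j) := by
  have := EP (fun i => parN_or _ _) (X.gl (k+1) hk) (X.hu c) (X.h1 _ hk c) (X.h2 _ hk c)
    ⟨i, by omega⟩ ⟨j, by omega⟩ (Fin.last k) (Fin.last k)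
  have n1 : ¬ (Fin.last k = ⟨j, by omega⟩) := by simp [Fin.ext_iff]; omega
  have n2 : ¬ ((⟨i, by omega⟩ : Fin (k+1)) = Fin.last k) := by simp [Fin.ext_iff]; omega
  rw [if_neg n1, if_neg n2, ← two_mul, ← mul_assoc, mul_comm _ 2, mul_assoc, pow_mul] at this
  simp at this
  exact this.symm

lemma comm_P (k : ℕ) (hk : k ≤ X.N) (c : ℤ) (x : R)
    (hx : ∀ i j, i < k → j < k → Commute x (X.E i j)) (i j : Fin k) : Commute x (X.P k c i j) := by
  refine comm_inv (X.h1 k hk c) (X.h2 k hk c) ?_ i j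
  intro i j
  have h := hx i j i.2 j.2
  have h' : Commute x (X.u c) := (X.hu c x).symm
  change Commute x (X.L k c i j)
  rw [L_apply]
  refine h.add_right ?_
  split_ifs
  · exact h'
  · exact Commute.zero_right x

lemma comm_y (k : ℕ) (hk : k < X.N) (c : ℤ) (x : R)
    (hx : ∀ i j, i < k + 1 → j < k + 1 → Commute x (X.E i j)) : Commute x (X.y k c) :=
  X.comm_P (k+1) hk c x hx _ _

lemma comm_z (k : ℕ) (hk : k ≤ X.N) (c : ℤ) (x : R)
    (hx : ∀ i j, i < k → j < k → Commute x (X.E i j)) : Commute x (X.z k c) := by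
  refine (Commute.one_right x).add_right ?_
  exact Commute.sum_right _ _ _ fun i _ => ((X.comm_P k hk c x hx i i).smul_right _)

/-- even block determinant -/
def D (k : ℕ) (hk : k ≤ X.m) (c : ℤ) : R :=
  qdF (fun (t i : Fin k) (j : Fin X.m) => X.E i j + if (i : ℕ) = j then X.u (c - t) else 0)
    (Fin.castLE hk)

lemma comm_qd {k : ℕ} {ι : Type} (Y : Fin k → Fin k → ι → R) (cc : Fin k → ι) (x : R)
    (h : ∀ t i, Commute x (Y t i (cc t))) : Commute x (qdF Y cc) := by
  refine Commute.sum_right _ _ _ fun f _ => Commute.smul_right ?_ _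
  refine Commute.list_prod_right _ _ fun a ha => ?_
  rw [List.mem_ofFn] at ha
  obtain ⟨t, rfl⟩ := ha
  exact h t _

lemma comm_D (k : ℕ) (hk : k ≤ X.m) (c : ℤ) (x : R)
    (hx : ∀ i j, i < k → j < k → Commute x (X.E i j)) : Commute x (X.D k hk c) := by
  refine comm_qd _ _ x fun t i => ?_
  refine (hx i _ i.2 (by simp)).add_right ?_
  split_ifs
  · exact (X.hu _ x).symm
  · exact Commute.zero_right x

lemma even_aux (u : R) (hu : ∀ r, u * r = r * u) (x1 x2 x3 x4 : R) (d1 d2 d3 d4 : R)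
    (hd1 : d1 = 0 ∨ d1 = 1) (hd2 : d2 = 0 ∨ d2 = 1) (hd3 : d3 = 0 ∨ d3 = 1) (hd4 : d4 = 0 ∨ d4 = 1)
    (e1 : x1 * x2 = x2 * x1 + d1 * x4 - d2 * x3)
    (e2 : x4 * x3 = x3 * x4 + d3 * x1 - d4 * x2) :
    (x1 + d4 * (u + 1)) * (x2 + d3 * u) - (x3 + d1 * (u + 1)) * (x4 + d2 * u)
     + (x4 + d2 * (u + 1)) * (x3 + d1 * u) - (x2 + d3 * (u + 1)) * (x1 + d4 * u) = 0 := by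
  rcases hd1 with rfl | rfl <;> rcases hd2 with rfl | rfl <;> rcases hd3 with rfl | rfl <;>
    rcases hd4 with rfl | rfl <;>
    simp only [mul_add, add_mul, hu x1, hu x2, hu x3, hu x4, e1, e2, zero_mul, one_mul, mul_one, mul_zero] <;>
    abel

lemma D_rec (k : ℕ) (hk : k + 1 ≤ X.m) (c : ℤ) :
    X.D k (by omega) c = X.D (k+1) hk c * X.y k (c - k) := by
  set Y : Fin (k+1) → Fin (k+1) → Fin X.m → R :=
    fun t i j => X.E i j + if (i : ℕ) = j then X.u (c - t) else 0 with hY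
  set cc : Fin k → Fin X.m := Fin.castLE (by omega) with hcc
  have hR : ∀ (t : Fin k) a b j l, Y t.castSucc a j * Y t.succ b l - Y t.castSucc b j * Y t.succ a l
      + Y t.castSucc a l * Y t.succ b j - Y t.castSucc b l * Y t.succ a j = 0 := by
    intro t a b j l
    have hN := X.hmN
    have g : ∀ i j k l : Fin X.m, X.E i j * X.E k l = X.E k l * X.E i j +
        (if (j : ℕ) = k then 1 else 0) * X.E i l - (if (l : ℕ) = i then 1 else 0) * X.E k j := by
      intro i j k l
      have := X.gl X.m hN i j k l
      simpa [parN, Fin.ext_iff] using this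
    have ha : (a : ℕ) < X.m := by omega
    have hb : (b : ℕ) < X.m := by omega
    have hus := X.hus (c - (t + 1))
    have e0 : c - ((t : ℕ) + 1 : ℤ) + 1 = c - (t : ℕ) := by ring
    rw [e0] at hus
    have ite01 : ∀ q : Prop, ∀ _ : Decidable q, (if q then (1:R) else 0) = 0 ∨ (if q then (1:R) else 0) = 1 := by
      intro q _; split_ifs <;> simp
    have itm : ∀ q : Prop, ∀ _ : Decidable q, ∀ x : R, (if q then x else 0) = (if q then (1:R) else 0) * x := by
      intro q _ x; split_ifs <;> simp
    have key := even_aux (X.u (c - (t + 1))) (X.hu _) (X.E a j) (X.E b l) (X.E b j) (X.E a l)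
      (if (j : ℕ) = b then 1 else 0) (if (l : ℕ) = a then 1 else 0) (if (l : ℕ) = b then 1 else 0)
      (if (j : ℕ) = a then 1 else 0) (ite01 _ _) (ite01 _ _) (ite01 _ _) (ite01 _ _)
      (g ⟨a, ha⟩ j ⟨b, hb⟩ l) (g ⟨a, ha⟩ l ⟨b, hb⟩ j)
    rw [← hus] at key
    simp only [hY, Fin.val_castSucc, Fin.val_succ, Nat.cast_add, Nat.cast_one]
    simp only [← itm] at key
    simp only [eq_comm (a := (a : ℕ)), eq_comm (a := (b : ℕ))]
    exact key
  have hcol : ∀ j : Fin (k+1), ∑ i, minR Y cc i * X.L (k+1) (c - k) i j =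
      if j = Fin.last k then X.D (k+1) hk c else 0 := by
    intro j
    have := qdF_snoc Y cc (Fin.castLE hk j)
    have e : ∀ i, Y (Fin.last k) i (Fin.castLE hk j) = X.L (k+1) (c - k) i j := by
      intro i
      simp [hY, L_apply, Fin.ext_iff]
    simp only [e] at this
    rw [← this]
    split_ifs with h
    · subst h
      rw [D]
      congr 1
      ext t
      refine Fin.lastCases ?_ (fun t => ?_) t <;> simp [hcc]
    · have hj : (j : ℕ) < k := by
        have := Fin.lt_last_iff_ne_last.mpr h
        exact this
      refine qdF_zero X.two Y hR _ (Fin.castSucc ⟨j, hj⟩) (Fin.last k) (Fin.castSucc_ne_last _) ?_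
      rw [Fin.snoc_castSucc, Fin.snoc_last]
      rfl
  have e1 : X.D k (by omega) c = minR Y cc (Fin.last k) := by
    rw [minR_last]; rfl
  have hN : k + 1 ≤ X.N := hk.trans X.hmN
  have hinv : X.L (k+1) (c - k) * X.P (k+1) (c - k) = 1 := X.h1 _ hN _
  have e2 : Matrix.vecMul (minR Y cc) (X.L (k+1) (c - k)) =
      fun j => if j = Fin.last k then X.D (k+1) hk c else 0 := by
    ext j
    exact hcol j
  have e3 : minR Y cc = Matrix.vecMul (fun j => if j = Fin.last k then X.D (k+1) hk c else 0)
      (X.P (k+1) (c - k)) := by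
    rw [← e2, Matrix.vecMul_vecMul, hinv, Matrix.vecMul_one]
  rw [e1, e3]
  simp [Matrix.vecMul, dotProduct, y]

lemma D_ind (k : ℕ) (hk : k ≤ X.m) (c : ℤ) :
    X.D k hk (c+1) = X.z k (c - k + 1) * X.D k hk c := by
  induction k with
  | zero => simp [D, z, qdF, strM, epsF]
  | succ k ih =>
    have hN : k < X.N := lt_of_lt_of_le hk X.hmN
    obtain ⟨d, d1, d2, _⟩ := X.schur k hN (c - k + 1)
    have r1 := X.D_rec k hk c
    have r2 := X.D_rec k hk (c + 1)
    have i1 := ih (by omega)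
    have s := X.step_even k hk (c - k)
    have e0 : c + 1 - (k : ℤ) = c - k + 1 := by ring
    rw [e0] at r2
    have c1 : Commute (X.z k (c - k + 1)) (X.D k (by omega) c) :=
      X.comm_D _ _ _ _ fun i j hi hj => X.z_comm k hN.le _ i j hi hj
    have c2 : Commute (X.z (k+1) (c - k)) (X.D (k+1) hk c) :=
      X.comm_D _ _ _ _ fun i j hi hj => X.z_comm (k+1) hN _ i j hi hj
    have e1 : c - ((k + 1 : ℕ) : ℤ) + 1 = c - k := by push_cast; ring
    rw [e1, c2.eq]
    calc X.D (k+1) hk (c+1) = X.D k (by omega) (c+1) * d := by rw [r2, mul_assoc, d1, mul_one]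
      _ = X.D (k+1) hk c * (X.y k (c - k) * X.z k (c - k + 1)) * d := by
        rw [i1, c1.eq, r1]; noncomm_ring
      _ = _ := by rw [s, mul_assoc, mul_assoc, d1, mul_one]

end NCtx
end NewtonInd


section NewtonOdd
namespace NCtx
variable {R : Type} [Ring R] (X : NCtx R)

lemma odd_rel (c : ℤ) (k l i j : Fin X.N) (hk : X.m ≤ k) (hl : X.m ≤ l) (hi : X.m ≤ i)
    (hj : X.m ≤ j) :
    X.P X.N c k l * X.P X.N (c+1) i j - X.P X.N c k j * X.P X.N (c+1) i l =
      X.P X.N (c+1) i j * X.P X.N c k l - X.P X.N (c+1) k j * X.P X.N c i l := by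
  have a1 : X.L X.N c * X.P X.N c = 1 := X.h1 _ le_rfl c
  have a2 : X.P X.N c * X.L X.N c = 1 := X.h2 _ le_rfl c
  have a3 : X.L X.N (c+1) * X.P X.N (c+1) = 1 := X.h1 _ le_rfl _
  have a4 : X.P X.N (c+1) * X.L X.N (c+1) = 1 := X.h2 _ le_rfl _
  have := PP (fun i => parN_or _ _) (X.gl _ le_rfl) (X.hu c) (X.hu (c+1)) a1 a2 a3 a4 k l i j
  have hLL : X.L X.N (c+1) = X.L X.N c + 1 := by
    ext i j
    rw [Matrix.add_apply, L_apply, L_apply, Matrix.one_apply, X.hus]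
    split_ifs <;> abel
  set P := X.P X.N c
  set P' := X.P X.N (c+1)
  have r1 : P * P' = P - P' := by
    calc P * P' = P * (X.L X.N (c+1) - X.L X.N c) * P' := by rw [hLL]; simp
      _ = P * (X.L X.N (c+1) * P') - P * X.L X.N c * P' := by noncomm_ring
      _ = _ := by rw [a3, a2, mul_one, one_mul]
  have r2 : P' * P = P - P' := by
    calc P' * P = P' * (X.L X.N (c+1) - X.L X.N c) * P := by rw [hLL]; simp
      _ = P' * X.L X.N (c+1) * P - P' * (X.L X.N c * P) := by noncomm_ring
      _ = _ := by rw [a1, a4, mul_one, one_mul]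
  rw [r1, r2] at this
  simp only [parN, hk.not_gt, hl.not_gt, hi.not_gt, hj.not_gt, if_false, Matrix.sub_apply] at this
  norm_num at this
  rw [this]
  noncomm_ring

/-- odd block -/
def G (r j : ℕ) (hj : X.m ≤ j) (h : j + r = X.N) (c : ℤ) : R :=
  qdF (fun (t i : Fin r) (l : {x : Fin X.N // X.m ≤ x}) => X.P X.N (c + t) l.1 ⟨j + i, by omega⟩)
    (fun t => ⟨⟨j + t, by omega⟩, by simp; omega⟩)

lemma G_rec (r j : ℕ) (hj : X.m ≤ j) (h : j + (r + 1) = X.N) (c : ℤ) :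
    X.G (r+1) j hj h c = X.y j c * X.G r (j+1) (by omega) (by omega) (c+1) := by
  set Y : Fin (r+1) → Fin (r+1) → {x : Fin X.N // X.m ≤ x} → R :=
    fun t i l => X.P X.N (c + t) l.1 ⟨j + i, by omega⟩ with hY
  set cc : Fin r → {x : Fin X.N // X.m ≤ x} :=
    fun t => ⟨⟨j + 1 + t, by omega⟩, by simp; omega⟩ with hcc
  have hR : ∀ (t : Fin r) a b j l, Y t.castSucc a j * Y t.succ b l - Y t.castSucc b j * Y t.succ a l
      + Y t.castSucc a l * Y t.succ b j - Y t.castSucc b l * Y t.succ a j = 0 := by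
    intro t a b x l
    have ha : X.m ≤ j + (a : ℕ) := by omega
    have hb : X.m ≤ j + (b : ℕ) := by omega
    have q1 := X.odd_rel (c + t) x.1 ⟨j + a, by omega⟩ l.1 ⟨j + b, by omega⟩ x.2 ha l.2 hb
    have q2 := X.odd_rel (c + t) l.1 ⟨j + a, by omega⟩ x.1 ⟨j + b, by omega⟩ l.2 ha x.2 hb
    simp only [hY, Fin.val_castSucc, Fin.val_succ, Nat.cast_add, Nat.cast_one, ← add_assoc]
    rw [q1, add_sub_assoc, q2]
    abel
  set M : Fin X.N → R := fun i => if hi : j ≤ i then minL Y cc ⟨i - j, by omega⟩ else 0 with hM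
  set x : Fin X.N → R := Matrix.mulVec (X.P X.N c) M with hx
  have hjN : j < X.N := by omega
  have hxl : ∀ l : Fin X.N, j ≤ l → x l = if (l : ℕ) = j then X.G (r+1) j hj h c else 0 := by
    intro l hl
    have := qdF_cons Y cc ⟨l, by omega⟩
    have e : x l = ∑ i, Y 0 i ⟨l, by omega⟩ * minL Y cc i := by
      rw [hx, Matrix.mulVec, dotProduct]
      symm
      refine Fintype.sum_of_injective (fun i : Fin (r+1) => (⟨j + i, by omega⟩ : Fin X.N)) ?_ _ _ ?_ ?_
      · intro a b hab
        simpa [Fin.ext_iff] using hab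
      · intro i hi
        rw [hM]
        simp only
        rw [dif_neg, mul_zero]
        intro hji
        exact hi ⟨⟨i - j, by omega⟩, by ext; simp; omega⟩
      · intro i
        simp [hM, hY]
    rw [e, ← this]
    split_ifs with hlj
    · rw [G]
      congr 1
      funext t
      refine Fin.cases ?_ (fun t => ?_) t
      · simp [hlj, Fin.ext_iff]
      · simp [hcc, Fin.ext_iff]; omega
    · refine qdF_zero X.two Y hR _ 0 (Fin.succ ⟨l - j - 1, by omega⟩) (Fin.succ_ne_zero _).symm ?_
      rw [Fin.cons_zero, Fin.cons_succ]
      simp [hcc, Fin.ext_iff]; omega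
  have hLx : Matrix.mulVec (X.L X.N c) x = M := by
    have : X.L X.N c * X.P X.N c = 1 := X.h1 _ le_rfl c
    rw [hx, Matrix.mulVec_mulVec, this, Matrix.one_mulVec]
  set f : Fin (j+1) → Fin X.N := Fin.castLE hjN with hf
  have hLx2 : Matrix.mulVec (X.L (j+1) c) (x ∘ f) = M ∘ f := by
    ext i
    rw [← hLx]
    simp only [Matrix.mulVec, dotProduct, Function.comp]
    refine Fintype.sum_of_injective f (Fin.castLE_injective _) _ _ ?_ ?_
    · intro b hb
      have hjb : j < b := by
        by_contra hcon
        exact hb ⟨⟨b, by omega⟩, by ext; simp [hf]⟩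
      rw [hxl b hjb.le, if_neg hjb.ne', mul_zero]
    · intro b
      simp [hf, L_apply, Fin.ext_iff]
  have hP : X.P (j+1) c * X.L (j+1) c = 1 := X.h2 _ hjN c
  have hx2 : x ∘ f = Matrix.mulVec (X.P (j+1) c) (M ∘ f) := by
    rw [← hLx2, Matrix.mulVec_mulVec, hP, Matrix.one_mulVec]
  have fin := congrFun hx2 (Fin.last j)
  rw [Function.comp, hxl _ (by simp [hf]), if_pos (by simp [hf])] at fin
  rw [fin, Matrix.mulVec, dotProduct, Finset.sum_eq_single (Fin.last j)]
  · rw [y]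
    congr 1
    have : (M ∘ f) (Fin.last j) = minL Y cc 0 := by
      simp [hM, hf]
    rw [this, minL_zero, G]
    congr 1
    funext t i l
    simp only [hY, Fin.val_succ]
    have w1 : c + (((t : ℕ) + 1 : ℕ) : ℤ) = c + 1 + (t : ℕ) := by push_cast; ring
    have w2 : (⟨j + ((i : ℕ) + 1), by omega⟩ : Fin X.N) = ⟨j + 1 + i, by omega⟩ := by
      ext; simp; omega
    rw [w1, w2]
  · intro b _ hb
    have hbj : (b : ℕ) < j := Fin.lt_last_iff_ne_last.mpr hb
    have : (M ∘ f) b = 0 := by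
      simp [hM, hf]; omega
    rw [this, mul_zero]
  · simp

lemma G_prod (r j : ℕ) (hj : X.m ≤ j) (h : j + r = X.N) (c : ℤ) :
    X.G r j hj h c = (List.ofFn fun t : Fin r => X.y (j + t) (c + t)).prod := by
  induction r generalizing j c with
  | zero => simp [G, qdF, epsF]
  | succ r ih =>
    rw [G_rec, ih, List.ofFn_succ, List.prod_cons]
    have : (fun t : Fin r => X.y (j + 1 + t) (c + 1 + t)) =
        fun t : Fin r => X.y (j + t.succ) (c + t.succ) := by
      funext t
      rw [Fin.val_succ]
      congr 1
      · ring
      · push_cast; ring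
    rw [this]
    simp

/-- partial Berezinian -/
def Cp (k : ℕ) (c : ℤ) : R :=
  X.D X.m le_rfl c * (List.ofFn fun t : Fin k => X.y (X.m + t) (c - X.m + 1 + t)).prod

lemma Cp_succ (k : ℕ) (c : ℤ) : X.Cp (k+1) c = X.Cp k c * X.y (X.m + k) (c - X.m + 1 + k) := by
  rw [Cp, List.ofFn_succ', List.concat_eq_append, List.prod_append, Cp]
  simp [mul_assoc]

lemma comm_Cp (k : ℕ) (hk : X.m + k ≤ X.N) (c : ℤ) (x : R)
    (hx : ∀ i j, i < X.m + k → j < X.m + k → Commute x (X.E i j)) : Commute x (X.Cp k c) := by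
  refine Commute.mul_right (X.comm_D _ _ _ _ fun i j hi hj => hx i j (by omega) (by omega)) ?_
  refine Commute.list_prod_right _ _ fun a ha => ?_
  rw [List.mem_ofFn] at ha
  obtain ⟨t, rfl⟩ := ha
  exact X.comm_y _ (by omega) _ _ fun i j hi hj => hx i j (by omega) (by omega)

lemma Cp_ind (k : ℕ) (hk : X.m + k ≤ X.N) (c : ℤ) :
    X.Cp k (c+1) = X.z (X.m + k) (c - X.m + k + 1) * X.Cp k c := by
  induction k with
  | zero => simpa [Cp] using X.D_ind X.m le_rfl c
  | succ k ih =>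
    have i1 := ih (by omega)
    have hN : X.m + k < X.N := by omega
    set j := X.m + k with hj
    set w : ℤ := c - X.m + k + 1 with hw
    have s := X.step_odd j (by omega) hN w
    have c1 : Commute (X.z j w) (X.Cp k c) :=
      X.comm_Cp _ (by omega) _ _ fun a b ha hb => X.z_comm j hN.le _ a b ha hb
    have c2 : Commute (X.z (j+1) (w+1)) (X.Cp k c) :=
      X.comm_Cp _ (by omega) _ _ fun a b ha hb => X.z_comm (j+1) hN _ a b (by omega) (by omega)
    have c3 : Commute (X.y j (w+1)) (X.z j w) :=
      X.comm_z j hN.le _ _ fun a b ha hb => X.y_commE j hN _ a b ha hb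
    rw [Cp_succ, Cp_succ]
    have e1 : c + 1 - (X.m : ℤ) + 1 + k = w + 1 := by rw [hw]; ring
    have e2 : c - (X.m : ℤ) + 1 + k = w := by rw [hw]; ring
    have e3 : c - (X.m : ℤ) + ((k + 1 : ℕ) : ℤ) + 1 = w + 1 := by rw [hw]; push_cast; ring
    have e4 : X.m + (k + 1) = j + 1 := by omega
    rw [e1, e2, e3, e4, i1, c1.eq, mul_assoc, ← c3.eq, s, ← mul_assoc, ← c2.eq, mul_assoc]

/-- the main identity -/
lemma main_id (n : ℕ) (hn : X.m + n = X.N) (c : ℤ) :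
    X.D X.m le_rfl (c + 1) * X.G n X.m le_rfl hn (c + 1 - X.m + 1) =
      X.z (X.m + n) (c - X.m + n + 1) * (X.D X.m le_rfl c * X.G n X.m le_rfl hn (c - X.m + 1)) := by
  have := X.Cp_ind n hn.le c
  rw [Cp, Cp] at this
  rw [G_prod, G_prod]
  exact this

end NCtx
end NewtonOdd


section NewtonSer
variable {A : Type} [Ring A]

lemma Tv_comm (x : TSer A) : (Tv : TSer A) * x = x * Tv := by
  ext k
  rw [Tv, HahnSeries.coeff_single_mul, HahnSeries.coeff_mul_single, one_mul, mul_one]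

lemma Tv_X : (Tv : TSer A) * HahnSeries.ofPowerSeries ℤ A PowerSeries.X = 1 := by
  rw [HahnSeries.ofPowerSeries_X, Tv, HahnSeries.single_mul_single]
  simp

variable {κ : Type} [Fintype κ] [DecidableEq κ]

/-- power series of a matrix -/
def serM (M : Matrix κ κ A) (i j : κ) : PowerSeries A := PowerSeries.mk fun k => (M ^ k) i j

/-- geometric series of a matrix -/
def geoM (M : Matrix κ κ A) : Matrix κ κ (TSer A) :=
  Matrix.of fun i j => HahnSeries.ofPowerSeries ℤ A (serM M i j * PowerSeries.X)

lemma serM_left (M : Matrix κ κ A) (i j : κ) :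
    ∑ a, PowerSeries.C (M i a) * (serM M a j * PowerSeries.X) =
      serM M i j - if i = j then 1 else 0 := by
  ext k
  rw [map_sum, map_sub]
  cases k with
  | zero =>
    simp only [PowerSeries.coeff_C_mul, PowerSeries.coeff_zero_mul_X, serM, PowerSeries.coeff_mk,
      pow_zero, Matrix.one_apply]
    split_ifs <;> simp
  | succ k =>
    simp only [PowerSeries.coeff_C_mul, PowerSeries.coeff_succ_mul_X, serM, PowerSeries.coeff_mk,
      pow_succ', Matrix.mul_apply]
    split_ifs <;> simp [PowerSeries.coeff_one]

lemma serM_right (M : Matrix κ κ A) (i j : κ) :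
    ∑ a, (serM M i a * PowerSeries.X) * PowerSeries.C (M a j) =
      serM M i j - if i = j then 1 else 0 := by
  ext k
  rw [map_sum, map_sub]
  cases k with
  | zero =>
    simp only [PowerSeries.coeff_mul_C, PowerSeries.coeff_zero_mul_X, serM, PowerSeries.coeff_mk,
      pow_zero, Matrix.one_apply]
    split_ifs <;> simp
  | succ k =>
    simp only [PowerSeries.coeff_mul_C, PowerSeries.coeff_succ_mul_X, serM, PowerSeries.coeff_mk,
      pow_succ, Matrix.mul_apply]
    split_ifs <;> simp [PowerSeries.coeff_one]

lemma Tv_geo (M : Matrix κ κ A) (i j : κ) :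
    Tv * geoM M i j = HahnSeries.ofPowerSeries ℤ A (serM M i j) := by
  rw [geoM, Matrix.of_apply, map_mul, ← mul_assoc, Tv_comm, mul_assoc, Tv_X, mul_one]

lemma ofite (i j : κ) : HahnSeries.ofPowerSeries ℤ A (if i = j then 1 else 0) =
    (1 : Matrix κ κ (TSer A)) i j := by
  rw [Matrix.one_apply]; split_ifs <;> simp

/-- the matrix `M - T` -/
def matT (M : Matrix κ κ A) : Matrix κ κ (TSer A) :=
  Matrix.of fun i j => HahnSeries.C (M i j) + if i = j then -Tv else 0

lemma geo_left (M : Matrix κ κ A) : matT M * (- geoM M) = 1 := by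
  ext i j : 2
  rw [Matrix.mul_neg, Matrix.neg_apply, Matrix.mul_apply]
  simp only [matT, Matrix.of_apply, add_mul, Finset.sum_add_distrib, ite_mul, zero_mul,
    Finset.sum_ite_eq, Finset.mem_univ, if_true, neg_mul, Tv_geo]
  simp only [geoM, Matrix.of_apply, ← HahnSeries.ofPowerSeries_C, ← map_mul, ← map_sum, serM_left]
  rw [map_sub, ofite]
  abel

lemma geo_right (M : Matrix κ κ A) : (- geoM M) * matT M = 1 := by
  ext i j : 2
  rw [Matrix.neg_mul, Matrix.neg_apply, Matrix.mul_apply]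
  simp only [matT, Matrix.of_apply, mul_add, Finset.sum_add_distrib, mul_ite, mul_zero,
    Finset.sum_ite_eq', Finset.mem_univ, if_true, mul_neg, ← Tv_comm, Tv_geo]
  simp only [geoM, Matrix.of_apply, ← HahnSeries.ofPowerSeries_C, ← map_mul, ← map_sum, serM_right]
  rw [map_sub, ofite]
  abel

lemma ring_inv_eq {S : Type} [Ring S] (a b : S) (h1 : a * b = 1) (h2 : b * a = 1) :
    Ring.inverse a = b := Ring.inverse_unit ⟨a, b, h1, h2⟩

variable [Algebra ℂ A]

lemma two_reg (x : TSer A) (h : x + x = 0) : x = 0 := by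
  ext k
  have h1 : x.coeff k + x.coeff k = 0 := by
    rw [← HahnSeries.coeff_add, h]; rfl
  have h2 : (2 : ℂ) • x.coeff k = 0 := by rw [two_smul, h1]
  have h3 : (2⁻¹ : ℂ) • (2 : ℂ) • x.coeff k = 0 := by rw [h2, smul_zero]
  rwa [smul_smul, inv_mul_cancel₀ two_ne_zero, one_smul] at h3

/-- constant twisted matrix -/
def sE (m n : ℕ) (e : Ind m n → Ind m n → A) : Matrix (Ind m n) (Ind m n) A :=
  Matrix.of fun i j => ((-1 : ℂ) ^ (pI i)) • e i j

lemma rElt_succ {ι : Type} [Fintype ι] [DecidableEq ι] (e : ι → ι → A) (p : ι → ℕ) (k : ℕ) (a b : ι) :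
    rElt e p (k+2) a b = ∑ x, ((-1 : ℂ) ^ p x) • (e a x * rElt e p (k+1) x b) := by
  simp only [rElt]
  rw [← (Fin.consEquiv fun _ => ι).sum_comp, Fintype.sum_prod_type]
  refine Finset.sum_congr rfl fun x _ => ?_
  rw [Finset.mul_sum, Finset.smul_sum]
  refine Finset.sum_congr rfl fun v _ => ?_
  have hc : chainF a b (Fin.cons (α := fun _ => ι) x v) = Fin.cons a (chainF x b v) := by
    rw [chainF, chainF, Fin.cons_snoc_eq_snoc_cons x v b]
  simp only [Fin.consEquiv, Equiv.coe_fn_mk]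
  rw [hc, List.ofFn_succ, List.prod_cons, Fin.sum_univ_succ, pow_add, mul_smul, mul_smul_comm]
  simp only [Fin.cons_zero, Fin.cons_succ, Fin.castSucc_zero, ← Fin.succ_castSucc]
  rfl

lemma rElt_pow {m n : ℕ} (e : Ind m n → Ind m n → A) (k : ℕ) (a b : Ind m n) :
    ((-1 : ℂ) ^ pI a) • rElt e pI (k+1) a b = (sE m n e ^ (k+1)) a b := by
  induction k generalizing a with
  | zero =>
    simp [rElt, sE, chainF, Fin.snoc]
  | succ k ih =>
    rw [rElt_succ, pow_succ', Matrix.mul_apply, Finset.smul_sum]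
    refine Finset.sum_congr rfl fun x _ => ?_
    rw [← ih, sE, Matrix.of_apply, smul_mul_assoc, mul_smul_comm]

lemma sgn_sq (q : ℕ) (x : A) : ((-1 : ℂ) ^ q) • ((-1 : ℂ) ^ q) • x = x := by
  rw [smul_smul, ← pow_add, ← two_mul, pow_mul]; simp

lemma zs (q : ℕ) (x : A) : ((-1 : ℤ) ^ q) • x = ((-1 : ℂ) ^ q) • x := by
  rcases Nat.even_or_odd q with h | h <;> simp [h]

lemma gelf_str {m n : ℕ} (e : Ind m n → Ind m n → A) (k : ℕ) :
    gelf e pI (k+1) = ∑ i, ((-1 : ℤ) ^ (pI i)) • (sE m n e ^ (k+1)) i i := by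
  rw [gelf]
  refine Finset.sum_congr rfl fun i _ => ?_
  rw [← rElt_pow, zs, sgn_sq]

lemma sum_sgn (m n : ℕ) :
    ((m : ℤ) - n) • (1 : A) = ∑ i : Ind m n, ((-1 : ℤ) ^ (pI i)) • (1 : A) := by
  rw [Fintype.sum_sum_type]
  simp [pI, sub_eq_add_neg]

lemma gel_eq (m n : ℕ) : GelSer m n = ∑ i, ((-1 : ℤ) ^ (pI i)) • geoM (sE m n (gen pI)) i i := by
  rw [GelSer, ← HahnSeries.ofPowerSeries_X, ← map_mul]
  simp only [geoM, Matrix.of_apply, ← map_zsmul, ← map_sum, ← smul_mul_assoc, ← Finset.sum_mul]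
  congr 2
  ext k
  rw [PowerSeries.coeff_mk, map_sum]
  cases k with
  | zero =>
    simp only [map_zsmul, serM, PowerSeries.coeff_mk, pow_zero, Matrix.one_apply_eq]
    exact sum_sgn m n
  | succ k =>
    simp only [gelf_str, map_zsmul, serM, PowerSeries.coeff_mk]

end NewtonSer


section NewtonApp
variable {A : Type} [Ring A] [Algebra ℂ A]

/-- index of a natural number -/
def idxN (m n : ℕ) (i : ℕ) (h : i < m + n) : Ind m n := finSumFinEquiv.symm ⟨i, h⟩

lemma pI_idx (m n i : ℕ) (h : i < m + n) : pI (idxN m n i h) = parN m i := by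
  obtain ⟨x, hx⟩ := finSumFinEquiv.surjective (⟨i, h⟩ : Fin (m+n))
  rw [idxN, ← hx, Equiv.symm_apply_apply]
  rcases x with x | x
  · have : i = x := by simpa [Fin.ext_iff] using hx.symm
    subst this
    simp [pI, parN]
  · have : i = m + x := by simpa [Fin.ext_iff] using hx.symm
    subst this
    simp [pI, parN]

lemma idx_inj (m n i j : ℕ) (hi : i < m + n) (hj : j < m + n) :
    idxN m n i hi = idxN m n j hj ↔ i = j := by
  simp [idxN]

lemma idx_inl (m n : ℕ) (t : Fin m) (h : (t : ℕ) < m + n) : idxN m n t h = Sum.inl t := by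
  rw [idxN, Equiv.symm_apply_eq]; ext; simp

lemma idx_inr (m n : ℕ) (t : Fin n) (h : m + (t : ℕ) < m + n) : idxN m n (m + t) h = Sum.inr t := by
  rw [idxN, Equiv.symm_apply_eq]; ext; simp

/-- matrix over naturals -/
def eN (m n : ℕ) (F : Matrix (Ind m n) (Ind m n) A) (i j : ℕ) : A :=
  if h : i < m + n ∧ j < m + n then F (idxN m n i h.1) (idxN m n j h.2) else 0

lemma eN_of (m n : ℕ) (F : Matrix (Ind m n) (Ind m n) A) (i j : ℕ) (hi : i < m + n)
    (hj : j < m + n) : eN m n F i j = F (idxN m n i hi) (idxN m n j hj) := by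
  rw [eN, dif_pos ⟨hi, hj⟩]

/-- leading block with shift -/
def blk (m n : ℕ) (F : Matrix (Ind m n) (Ind m n) A) (k : ℕ) (c : ℤ) : Matrix (Fin k) (Fin k) A :=
  Matrix.of fun i j => eN m n F i j + if i = j then (c : A) else 0

lemma matT_blk (m n : ℕ) (F : Matrix (Ind m n) (Ind m n) A) (k : ℕ) (c : ℤ) :
    (Matrix.of fun i j : Fin k => (HahnSeries.C (eN m n F i j) : TSer A)) +
      (Matrix.diagonal fun _ => (-Tv + (c : TSer A))) = matT (blk m n F k c) := by
  ext i j : 2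
  rw [Matrix.add_apply, Matrix.diagonal_apply, Matrix.of_apply, matT, Matrix.of_apply, blk,
    Matrix.of_apply, map_add]
  split_ifs
  · rw [map_intCast]; abel
  · simp

lemma gl_blk (m n : ℕ) (F : Matrix (Ind m n) (Ind m n) A) (hF : IsGl pI F) (k : ℕ) (hk : k ≤ m + n) :
    IsGl (fun i : Fin k => parN m i)
      (Matrix.of fun i j : Fin k => (HahnSeries.C (eN m n F i j) : TSer A)) := by
  intro i j a b
  have hi : (i : ℕ) < m + n := by omega
  have hj : (j : ℕ) < m + n := by omega
  have ha : (a : ℕ) < m + n := by omega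
  have hb : (b : ℕ) < m + n := by omega
  have := hF (idxN m n i hi) (idxN m n j hj) (idxN m n a ha) (idxN m n b hb)
  simp only [pI_idx, idx_inj, ← eN_of] at this
  have := congrArg (HahnSeries.C (Γ := ℤ)) this
  simp only [map_mul, map_sub, map_add, map_zsmul, apply_ite (HahnSeries.C (Γ := ℤ) (R := A)), map_zero] at this
  simpa only [Matrix.of_apply, Fin.ext_iff] using this

/-- the concrete context -/
def ctx (m n : ℕ) (F : Matrix (Ind m n) (Ind m n) A) (hF : IsGl pI F) : NCtx (TSer A) where
  N := m + n
  m := m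
  hmN := by omega
  E i j := HahnSeries.C (eN m n F i j)
  u c := -Tv + (c : TSer A)
  hu c r := by
    rw [add_mul, mul_add, neg_mul, mul_neg, Tv_comm, (Int.cast_commute c r).eq]
  hus c := by push_cast; abel
  gl := gl_blk m n F hF
  P k c := - geoM (blk m n F k c)
  h1 k _ c := by rw [matT_blk, geo_left]
  h2 k _ c := by rw [matT_blk, geo_right]
  two := two_reg

lemma geo_reidx {κ κ' : Type} [Fintype κ] [DecidableEq κ] [Fintype κ'] [DecidableEq κ']
    (f : κ' ≃ κ) (M : Matrix κ κ A) : geoM (M.submatrix f f) = (geoM M).submatrix f f := by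
  ext i j : 2
  have : ∀ k, (M.submatrix f f) ^ k = (M ^ k).submatrix f f := by
    intro k
    induction k with
    | zero => simp
    | succ k ih => rw [pow_succ, ih, Matrix.submatrix_mul_equiv, pow_succ]
  simp only [geoM, serM, Matrix.submatrix_apply, Matrix.of_apply, this]

/-- shifted full matrix -/
def shF (m n : ℕ) (F : Matrix (Ind m n) (Ind m n) A) (c : ℤ) : Matrix (Ind m n) (Ind m n) A :=
  Matrix.of fun i j => F i j + if i = j then (c : A) else 0

lemma blk_full (m n : ℕ) (F : Matrix (Ind m n) (Ind m n) A) (c : ℤ) :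
    blk m n F (m + n) c = (shF m n F c).submatrix finSumFinEquiv.symm finSumFinEquiv.symm := by
  ext i j
  simp only [blk, shF, Matrix.of_apply, Matrix.submatrix_apply, eN_of m n F i j i.2 j.2, idxN,
    Equiv.apply_eq_iff_eq]

lemma csm (c : ℤ) : ((c : ℂ) • (1 : TSer A)) = (c : TSer A) := by
  rw [Int.cast_smul_eq_zsmul, zsmul_one]

lemma cap_eq (m n : ℕ) (F : Matrix (Ind m n) (Ind m n) A) (hF : IsGl pI F) (c : ℤ) (v : TSer A)
    (hv : v = Tv - (c : TSer A)) :
    capelli (Matrix.of fun i j => (HahnSeries.C (F i j) : TSer A)) v =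
      (ctx m n F hF).D m le_rfl c * (ctx m n F hF).G n m le_rfl rfl (c - m + 1) := by
  rw [capelli]
  congr 1
  · refine Eq.trans ?_ (qdF_perm _ _)
    refine Finset.sum_congr rfl fun σ _ => ?_
    congr 3
    funext t
    change _ = HahnSeries.C (eN m n F (σ t) t) +
      if ((σ t : ℕ) = (t : ℕ)) then (-Tv + ((c - (t : ℕ) : ℤ) : TSer A)) else 0
    have e2 : - Tv + ((c - (t : ℕ) : ℤ) : TSer A) = - (v + (((t : ℕ) : ℂ) • 1)) := by
      rw [← Int.cast_natCast (R := ℂ), csm, hv]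
      push_cast
      abel
    rw [eN_of m n F _ _ (by omega) (by omega), idx_inl, idx_inl, e2]
    rw [Matrix.of_apply]
    simp only [← Fin.ext_iff]
    split_ifs <;> simp [sub_eq_add_neg]
  · refine Eq.trans ?_ (qdF_perm _ _)
    refine Finset.sum_congr rfl fun τ _ => ?_
    congr 3
    funext t
    have key : (- geoM (blk m n F (m + n) (c - m + 1 + (t : ℕ)))) (⟨m + t, by omega⟩ : Fin (m + n))
        (⟨m + τ t, by omega⟩ : Fin (m + n)) =
        (- geoM (shF m n F (c - m + 1 + (t : ℕ)))) (Sum.inr t) (Sum.inr (τ t)) := by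
      rw [blk_full, geo_reidx, Matrix.neg_apply, Matrix.neg_apply, Matrix.submatrix_apply]
      have := idx_inr m n t (by omega)
      have h2 := idx_inr m n (τ t) (by omega)
      rw [idxN] at this h2
      rw [this, h2]
    refine Eq.trans ?_ key.symm
    rw [ring_inv_eq _ (- geoM (shF m n F (c - m + 1 + (t : ℕ))))]
    all_goals
      have e : ((Matrix.of fun i j => (HahnSeries.C (F i j) : TSer A)) - (v + (((((m : ℂ) - ((t : ℕ) : ℂ)) - 1)) • 1)) •
            (1 : Matrix (Ind m n) (Ind m n) (TSer A))) = matT (shF m n F (c - m + 1 + (t : ℕ))) := by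
        have e2 : ((((m : ℂ) - ((t : ℕ) : ℂ)) - 1)) • (1 : TSer A) = ((m - (t : ℕ) - 1 : ℤ) : TSer A) := by
          rw [← csm]; push_cast; rfl
        rw [e2]
        ext i j : 2
        rw [Matrix.sub_apply, Matrix.smul_apply, Matrix.one_apply, Matrix.of_apply, matT, Matrix.of_apply,
          shF, Matrix.of_apply, map_add]
        split_ifs
        · rw [map_intCast, hv, smul_eq_mul, mul_one]
          push_cast
          abel
        · simp
      rw [e]
    · exact geo_left _
    · exact geo_right _

lemma newton_gen (m n : ℕ) (F : Matrix (Ind m n) (Ind m n) A) (hF : IsGl pI F) :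
    capelli (Matrix.of fun i j => (HahnSeries.C (F i j) : TSer A)) (Tv - ((((m : ℂ) - n)) • 1)) =
      (1 - ∑ i, ((-1 : ℤ) ^ (pI i)) • geoM F i i) *
        capelli (Matrix.of fun i j => (HahnSeries.C (F i j) : TSer A))
          (Tv - ((((m : ℂ) - n)) • 1) + 1) := by
  have ec : (((m : ℂ) - n)) • (1 : TSer A) = (((m : ℤ) - n : ℤ) : TSer A) := by
    rw [← csm]; push_cast; rfl
  rw [cap_eq m n F hF (m - n - 1 + 1) _ (by rw [ec]; push_cast; abel),
    cap_eq m n F hF (m - n - 1) (Tv - ((((m : ℂ) - n)) • 1) + 1) (by rw [ec]; push_cast; abel)]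
  have := (ctx m n F hF).main_id n rfl (m - n - 1)
  refine this.trans ?_
  congr 1
  have e0 : ((m : ℤ) - n - 1) - m + n + 1 = 0 := by ring
  change (ctx m n F hF).z (m + n) (((m : ℤ) - n - 1) - m + n + 1) = _
  rw [e0, NCtx.z, sub_eq_add_neg]
  congr 1
  have hs : shF m n F 0 = F := by ext i j; simp [shF]
  change ∑ i : Fin (m + n), (-1 : ℤ) ^ parN m i • ((- geoM (blk m n F (m + n) 0)) i i) = _
  rw [blk_full, hs, geo_reidx, ← Finset.sum_neg_distrib, ← finSumFinEquiv.symm.sum_comp]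
  refine Finset.sum_congr rfl fun i _ => ?_
  have := pI_idx m n i i.2
  rw [idxN] at this
  rw [← this, Matrix.neg_apply, Matrix.submatrix_apply, smul_neg]

end NewtonApp

lemma sE_gl (m n : ℕ) : IsGl pI (sE m n (gen (pI (m := m) (n := n)))) := by
  intro i j k l
  have h := RingQuot.mkAlgHom_rel ℂ (glRel.basic (p := (pI (m := m) (n := n))) i j k l)
  rw [map_sub, map_sub, map_smul, map_mul, map_mul, map_smul, apply_ite (RingQuot.mkAlgHom ℂ (glRel (Ind m n) pI)),
    apply_ite (RingQuot.mkAlgHom ℂ (glRel (Ind m n) pI)), map_zero] at h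
  change gen pI i j * gen pI k l - _ • (gen pI k l * gen pI i j) =
    (if j = k then gen pI i l else 0) - _ • (if l = i then gen pI k j else 0) at h
  rw [sub_eq_iff_eq_add] at h
  simp only [sE, Matrix.of_apply, zs, smul_mul_assoc, mul_smul_comm, h, smul_add, smul_sub, smul_smul, smul_ite, smul_zero]
  have q1 : (-1 : ℂ) ^ pI k * ((-1) ^ pI i * (-1) ^ ((pI i + pI j) * (pI k + pI l))) =
      (-1) ^ ((pI i + pI j) * (pI k + pI l)) * ((-1) ^ pI i * (-1) ^ pI k) := by ring
  have q2 : (-1 : ℂ) ^ ((pI i + pI j) * (pI k + pI l) + pI i) * (-1) ^ pI k =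
      (-1) ^ ((pI i + pI j) * (pI k + pI l)) * ((-1) ^ pI i * (-1) ^ pI k) := by
    rw [pow_add]; ring
  rw [q1, q2]
  abel

/-- Theorem 5.4, Newton's formula for `gl(m|n)`.  As Laurent series in `T`
with central coefficients:
`C_{m|n}(T−(m−n)) / C_{m|n}(T−(m−n)+1) = 1 − Σ_{k=0}^∞ G_k T^{−1−k}`. -/
theorem stmt13 (m n : ℕ) :
    capelli (scrE m n (gen pI)) (Tv - ((((m : ℂ) - n)) • 1)) =
      (1 - GelSer m n) *
        capelli (scrE m n (gen pI)) (Tv - ((((m : ℂ) - n)) • 1) + 1) := by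
  rw [gel_eq]
  exact newton_gen m n (sE m n (gen pI)) (sE_gl m n)
end
end

section
/- For all positive integers k and all a,b ∈ I: φ_R(r_k^{gl(m+1|n)}(a,b)) = F_k(a,b) + D_k(a,b); φ_R(r_k^{gl(m+1|n)}(a,0)) = A_k(1)(t_a∂_0⊗1) − E_k(a) − ((t_a/t_0)⊗1)·Σ_{s=2}^{k} A_k(s)B(s); φ_R(r_k^{gl(m+1|n)}(0,b)) = F_k(0,b); and φ_R(r_k^{gl(m+1|n)}(0,0)) = A_k(1)(t_0∂_0⊗1) + R^k − Σ_{s=2}^{k} A_k(s)B(s). -/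
set_option maxHeartbeats 1000000
set_option synthInstance.maxHeartbeats 400000

noncomputable section
open scoped TensorProduct

/-- Monomials `t_0^{k} t^e t̄^b` of `F = ℂ[t_0^{±1},t_1,…,t_m] ⊗ Λ_n`. -/
abbrev FMon (m n : ℕ) := ℤ × (Fin m → ℕ) × (Fin n → Bool)

/-- `F = ℂ[t_0^{±1},t_1,…,t_m] ⊗ Λ_n` as the vector space with basis the monomials. -/
abbrev FSp (m n : ℕ) : Type := FMon m n →₀ ℂ

/-- The basis monomial of `F` attached to `x`. -/
def fmono {m n : ℕ} (x : FMon m n) : FSp m n := Finsupp.single x 1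

/-- Left multiplication by `t_i/t_0` for an even index `i ∈ {1,…,m}`. -/
def opDivE {m n : ℕ} (i : Fin m) : Module.End ℂ (FSp m n) :=
  mkOp fun x => fmono (x.1 - 1, Function.update x.2.1 i (x.2.1 i + 1), x.2.2)

/-- Left multiplication by `t_ī/t_0` for an odd index `ī`. -/
def opDivO {m n : ℕ} (i : Fin n) : Module.End ℂ (FSp m n) :=
  mkOp fun x => if x.2.2 i then 0 else
    ((-1 : ℂ) ^ (cntB x.2.2 i)) • fmono (x.1 - 1, x.2.1, Function.update x.2.2 i true)

/-- The operator `t_0 ∂_0`. -/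
def opPar0 {m n : ℕ} : Module.End ℂ (FSp m n) :=
  mkOp fun x => (x.1 : ℂ) • fmono x

/-- The operator `t_0 ∂_i` for an even index `i ∈ {1,…,m}`. -/
def opParE {m n : ℕ} (i : Fin m) : Module.End ℂ (FSp m n) :=
  mkOp fun x => (x.2.1 i : ℂ) • fmono (x.1 + 1, Function.update x.2.1 i (x.2.1 i - 1), x.2.2)

/-- The operator `t_0 ∂_ī` for an odd index `ī`. -/
def opParO {m n : ℕ} (i : Fin n) : Module.End ℂ (FSp m n) :=
  mkOp fun x => if x.2.2 i then
    ((-1 : ℂ) ^ (cntB x.2.2 i)) • fmono (x.1 + 1, x.2.1, Function.update x.2.2 i false) else 0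

/-- The multiplication operators `t_i/t_0`, `i ∈ I`. -/
def opDiv {m n : ℕ} : Ind m n → Module.End ℂ (FSp m n) := Sum.elim opDivE opDivO

/-- The operators `t_0 ∂_i`, `i ∈ Î`. -/
def opPar {m n : ℕ} : Ind (m+1) n → Module.End ℂ (FSp m n) :=
  Sum.elim (Fin.cases opPar0 opParE) opParO

/-- The multiplication operators `t_i/t_0` for `i ∈ Î` (equal to `1` for `i = 0`). -/
def opDivB {m n : ℕ} : Ind (m+1) n → Module.End ℂ (FSp m n) :=
  Sum.elim (Fin.cases 1 opDivE) opDivO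

/-- The generators of `D'(m|n)`. -/
def Dgens (m n : ℕ) : Set (Module.End ℂ (FSp m n)) := Set.range opDiv ∪ Set.range opPar

/-- The superalgebra `D'(m|n)` of differential operators on `F`, i.e. the subalgebra of
operators on `F` generated by `t_i/t_0` (`i ∈ I`) and `t_0∂_i` (`i ∈ Î`). -/
def Dprime (m n : ℕ) : Subalgebra ℂ (Module.End ℂ (FSp m n)) := Algebra.adjoin ℂ (Dgens m n)

/-- `t_i/t_0` as an element of `D'(m|n)`. -/
def tdiv {m n : ℕ} (i : Ind m n) : Dprime m n :=
  ⟨opDiv i, Algebra.subset_adjoin (Or.inl ⟨i, rfl⟩)⟩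

/-- `t_0∂_i` as an element of `D'(m|n)`. -/
def tpar {m n : ℕ} (i : Ind (m+1) n) : Dprime m n :=
  ⟨opPar i, Algebra.subset_adjoin (Or.inr ⟨i, rfl⟩)⟩

/-- `t_i/t_0` for `i ∈ Î` as an element of `D'(m|n)`. -/
def tdivB {m n : ℕ} : Ind (m+1) n → Dprime m n :=
  Sum.elim (Fin.cases 1 fun i => tdiv (Sum.inl i)) fun i => tdiv (Sum.inr i)

/-- The operator `t_a∂_b = (t_a/t_0)(t_0∂_b)` of `D'(m|n)`, for `a, b ∈ Î`. -/
def tdel {m n : ℕ} (a b : Ind (m+1) n) : Dprime m n := tdivB a * tpar b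

/-- The Euler operator `E = Σ_{i∈Î} t_i∂_i ∈ D'(m|n)`. -/
def En (m n : ℕ) : Dprime m n := ∑ i : Ind (m+1) n, tdel i i

noncomputable instance instDprimeRing (m n : ℕ) : Ring (Dprime m n) :=
  @Subalgebra.toRing ℂ (Module.End ℂ (FSp m n)) inferInstance inferInstance inferInstance _

noncomputable instance instDprimeAlgebra (m n : ℕ) : Algebra ℂ (Dprime m n) :=
  @Subalgebra.algebra ℂ (Module.End ℂ (FSp m n)) inferInstance inferInstance inferInstance _

/-- The super tensor product `D'(m|n) ⊗ U(gl(m|n))`, axiomatized: an algebra `T` together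
with algebra maps `d ↦ d⊗1`, `u ↦ 1⊗u`, such that the induced linear map
`D'(m|n) ⊗_ℂ U(gl(m|n)) → T` is a linear isomorphism and such that the Koszul sign rule
`(1⊗u)(d⊗1) = (−1)^{|u||d|}(d⊗1)(1⊗u)` holds on (super-)generators. -/
structure SuperTensor (m n : ℕ) where
  T : Type
  [ringT : Ring T]
  [algT : Algebra ℂ T]
  inD : Dprime m n →ₐ[ℂ] T
  inU : UEA (Ind m n) pI →ₐ[ℂ] T
  equiv : ((Dprime m n) ⊗[ℂ] (UEA (Ind m n) pI)) ≃ₗ[ℂ] T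
  equiv_tmul : ∀ (d : Dprime m n) (u : UEA (Ind m n) pI), equiv (d ⊗ₜ u) = inD d * inU u
  comm_div : ∀ (i j k : Ind m n),
    inU (gen pI i j) * inD (tdiv k) =
      ((-1 : ℂ) ^ ((pI i + pI j) * pI k)) • (inD (tdiv k) * inU (gen pI i j))
  comm_par : ∀ (i j : Ind m n) (k : Ind (m+1) n),
    inU (gen pI i j) * inD (tpar k) =
      ((-1 : ℂ) ^ ((pI i + pI j) * pI k)) • (inD (tpar k) * inU (gen pI i j))

attribute [instance] SuperTensor.ringT SuperTensor.algT

/-- The predicate expressing that `φ : U(gl(m+1|n)) → D'(m|n) ⊗ U(gl(m|n))` is given on the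
generators `e_ab` by the formulas of Theorem 3.1 (for the central element `R`). -/
def IsPhi {m n : ℕ} (ST : SuperTensor m n) (R : ST.T)
    (φ : UEA (Ind (m+1) n) pI →ₐ[ℂ] ST.T) : Prop :=
  (∀ a b : Ind m n, φ (gen pI (emb a) (emb b)) =
      ST.inD (tdel (emb a) (emb b)) + ST.inU (gen pI a b)
        + (if a = b then ((-1 : ℂ) ^ (pI a * pI b)) • R else 0)) ∧
  (∀ a : Ind m n, φ (gen pI (emb a) z0) =
      ST.inD (tdel (emb a) z0)
        - ∑ j : Ind m n, ((-1 : ℂ) ^ (pI a * pI j)) • (ST.inD (tdiv j) * ST.inU (gen pI a j))) ∧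
  (∀ b : Ind m n, φ (gen pI z0 (emb b)) = ST.inD (tdel z0 (emb b))) ∧
  (φ (gen pI z0 z0) = ST.inD (tdel z0 z0) + R)

/-- The generating set of `U(sl(m+1|n))` inside `U(gl(m+1|n))`: the `e_ij` with `i ≠ j`
together with `e_00 − (−1)^{|a|} e_aa` for `a ∈ I`. -/
def slSet (m n : ℕ) : Set (UEA (Ind (m+1) n) pI) :=
  {x | (∃ i j : Ind (m+1) n, i ≠ j ∧ x = gen pI i j) ∨
    (∃ a : Ind m n, x = gen pI z0 z0 - ((-1 : ℂ) ^ (pI a)) • gen pI (emb a) (emb a))}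

/-- `U(sl(m+1|n))`, realized as the subalgebra of `U(gl(m+1|n))` generated by `sl(m+1|n)`. -/
def Usl (m n : ℕ) : Subalgebra ℂ (UEA (Ind (m+1) n) pI) := Algebra.adjoin ℂ (slSet m n)

lemma mem_gen_ne {m n : ℕ} {i j : Ind (m+1) n} (h : i ≠ j) : gen pI i j ∈ Usl m n :=
  Algebra.subset_adjoin (Or.inl ⟨i, j, h, rfl⟩)

lemma mem_h {m n : ℕ} (a : Ind m n) :
    gen pI z0 z0 - ((-1 : ℂ) ^ (pI a)) • gen pI (emb a) (emb a) ∈ Usl m n :=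
  Algebra.subset_adjoin (Or.inr ⟨a, rfl⟩)

/-- The predicate expressing that `ψ : U(sl(m+1|n)) → D'(m|n) ⊗ U(gl(m|n))` is given on the
generators by the formulas of Corollary 3.2 (the homomorphism `φ^s`). -/
def IsPhiS {m n : ℕ} (ST : SuperTensor m n) (ψ : Usl m n →ₐ[ℂ] ST.T) : Prop :=
  (∀ (a b : Ind m n) (h : a ≠ b),
    ψ ⟨gen pI (emb a) (emb b), mem_gen_ne fun he => h (emb_injective he)⟩ =
      ST.inD (tdel (emb a) (emb b)) + ST.inU (gen pI a b)) ∧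
  (∀ a : Ind m n, ψ ⟨gen pI (emb a) z0, mem_gen_ne (emb_ne_z0 a)⟩ =
      ST.inD (tdel (emb a) z0)
        - ∑ j : Ind m n, ((-1 : ℂ) ^ (pI a * pI j)) • (ST.inD (tdiv j) * ST.inU (gen pI a j))) ∧
  (∀ b : Ind m n, ψ ⟨gen pI z0 (emb b), mem_gen_ne (Ne.symm (emb_ne_z0 b))⟩ =
      ST.inD (tdel z0 (emb b))) ∧
  (∀ a : Ind m n, ψ ⟨gen pI z0 z0 - ((-1 : ℂ) ^ (pI a)) • gen pI (emb a) (emb a), mem_h a⟩ =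
      ST.inD (tdel (m:=m) (n:=n) z0 z0 - ((-1 : ℂ) ^ (pI a)) • tdel (emb a) (emb a))
        - ((-1 : ℂ) ^ (pI a)) • ST.inU (gen pI a a))

/-- The first Gelfand invariant `G₁ = Σ_i e_ii`. -/
def G1 (ι : Type) (p : ι → ℕ) [DecidableEq ι] [Fintype ι] : UEA ι p := ∑ i : ι, gen p i i

/-- The distinguished central element `R₁ = −(1/(m−n+1))(E⊗1 + 1⊗G₁)`. -/
def R1elt {m n : ℕ} (ST : SuperTensor m n) : ST.T :=
  -(1 / ((m : ℂ) - n + 1)) • (ST.inD (En m n) + ST.inU (G1 (Ind m n) pI))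

/-- `R₂ = (E+m−n)⊗1`. -/
def R2elt {m n : ℕ} (ST : SuperTensor m n) : ST.T :=
  ST.inD (En m n) + ((m : ℂ) - n) • 1

/-- `A_k(s) = Σ_{g=0}^{k−s} C(k,g) R^g R₂^{k−s−g}`. -/
def AkT {m n : ℕ} (ST : SuperTensor m n) (R : ST.T) (k s : ℕ) : ST.T :=
  ∑ g ∈ Finset.range (k - s + 1), (k.choose g : ℂ) • (R ^ g * R2elt ST ^ (k - s - g))

/-- The element `∂_i t_j = (−1)^{|i||j|} t_j∂_i + δ_ij` of `D'(m|n)`. -/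
def ptD {m n : ℕ} (i j : Ind m n) : Dprime m n :=
  ((-1 : ℂ) ^ (pI i * pI j)) • tdel (emb j) (emb i) + (if i = j then 1 else 0)

/-- `B(s) = Σ_{i,j∈I} (−1)^{|i|(1+|j|)} ∂_i t_j ⊗ r_{s−1}(i,j)`. -/
def BT {m n : ℕ} (ST : SuperTensor m n) (s : ℕ) : ST.T :=
  ∑ i : Ind m n, ∑ j : Ind m n, ((-1 : ℂ) ^ (pI i * (1 + pI j))) •
    (ST.inD (ptD i j) * ST.inU (rElt (gen pI) pI (s - 1) i j))

/-- `D_k(a,b) = Σ_{g=0}^{k} C(k,g) R^g (1⊗r_{k−g}(a,b))`. -/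
def DkT {m n : ℕ} (ST : SuperTensor m n) (R : ST.T) (k : ℕ) (a b : Ind m n) : ST.T :=
  ∑ g ∈ Finset.range (k + 1), (k.choose g : ℂ) •
    (R ^ g * ST.inU (rElt (gen pI) pI (k - g) a b))

/-- `E_k(a) = Σ_{g=0}^{k−1} C(k,g) R^g Σ_{j∈I} (−1)^{|a||j|} (t_j/t_0)⊗r_{k−g}(a,j)`. -/
def EkT {m n : ℕ} (ST : SuperTensor m n) (R : ST.T) (k : ℕ) (a : Ind m n) : ST.T :=
  ∑ g ∈ Finset.range k, (k.choose g : ℂ) •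
    (R ^ g * ∑ j : Ind m n, ((-1 : ℂ) ^ (pI a * pI j)) •
      (ST.inD (tdiv j) * ST.inU (rElt (gen pI) pI (k - g) a j)))

/-- `f_s(a,b) = Σ_{i∈I} (−1)^{|i|} t_a∂_i ⊗ r_{s−1}(i,b)`, for `a ∈ Î`, `b ∈ I`. -/
def fsT {m n : ℕ} (ST : SuperTensor m n) (s : ℕ) (a : Ind (m+1) n) (b : Ind m n) : ST.T :=
  ∑ i : Ind m n, ((-1 : ℂ) ^ (pI i)) •
    (ST.inD (tdel a (emb i)) * ST.inU (rElt (gen pI) pI (s - 1) i b))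

/-- `F_k(a,b) = Σ_{s=1}^{k} f_s(a,b) A_k(s)`. -/
def FkT {m n : ℕ} (ST : SuperTensor m n) (R : ST.T) (k : ℕ)
    (a : Ind (m+1) n) (b : Ind m n) : ST.T :=
  ∑ s ∈ Finset.Icc 1 k, fsT ST s a b * AkT ST R k s


/-! ### generic lemmas -/

lemma rElt_rec {ι A : Type} [Fintype ι] [DecidableEq ι] [Ring A] [Algebra ℂ A]
    (e : ι → ι → A) (p : ι → ℕ) (k : ℕ) (a b : ι) :
    rElt e p (k+1) a b = ∑ c : ι, ((-1 : ℂ) ^ (p c)) • (e a c * rElt e p k c b) := by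
  cases k with
  | zero =>
    have h : ∀ c : ι, ((-1 : ℂ) ^ (p c)) • (e a c * rElt e p 0 c b)
        = if c = b then e a b else 0 := by
      intro c
      by_cases hc : c = b
      · subst hc
        simp only [rElt, if_true, mul_smul_comm, mul_one, smul_smul, ← pow_add]
        have : Even (p c + p c * p c) := by
          have := Nat.even_mul_succ_self (p c)
          convert this using 1; ring
        rw [this.neg_one_pow, one_smul]
      · simp [rElt, hc]
    rw [Finset.sum_congr rfl fun c _ => h c]
    simp [rElt, chainF]
    rfl
  | succ k =>
    simp only [rElt]
    rw [← (Fin.consEquiv fun _ : Fin (k+1) => ι).sum_comp, Fintype.sum_prod_type]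
    refine Finset.sum_congr rfl fun c _ => ?_
    rw [Finset.mul_sum, Finset.smul_sum]
    refine Finset.sum_congr rfl fun v _ => ?_
    have h : chainF a b (Fin.cons c v : Fin (k+1) → ι) = Fin.cons a (chainF c b v) := by
      unfold chainF
      rw [← Fin.cons_snoc_eq_snoc_cons]
    have h' : (Fin.consEquiv fun _ : Fin (k+1) => ι) (c, v) = (Fin.cons c v : Fin (k+1) → ι) := rfl
    rw [h', h, List.ofFn_succ, List.prod_cons, Fin.sum_univ_succ, pow_add, mul_smul, mul_smul_comm]
    simp [chainF]

lemma sum_emb {M : Type} [AddCommMonoid M] {m n : ℕ} (f : Ind (m+1) n → M) :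
    ∑ x, f x = f z0 + ∑ c : Ind m n, f (emb c) := by
  rw [Fintype.sum_sum_type, Fin.sum_univ_succ, Fintype.sum_sum_type, add_assoc]
  rfl

lemma pI_emb {m n : ℕ} (c : Ind m n) : pI (emb c) = pI c := by cases c <;> rfl
lemma pI_z0 {m n : ℕ} : pI (z0 : Ind (m+1) n) = 0 := rfl

lemma pascal_conv {T : Type} [Ring T] [Algebra ℂ T] (R : T) (x : ℕ → T) (k : ℕ) :
    ∑ g ∈ Finset.range (k+2), ((k+1).choose g : ℂ) • (R ^ g * x (k+1-g)) =
      ∑ g ∈ Finset.range (k+1), (k.choose g : ℂ) • (R ^ g * x (k+1-g)) +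
      R * ∑ g ∈ Finset.range (k+1), (k.choose g : ℂ) • (R ^ g * x (k-g)) := by
  rw [Finset.sum_range_succ']
  simp only [Nat.choose_succ_succ, Nat.cast_add, add_smul, Finset.sum_add_distrib]
  have h1 : ∑ g ∈ Finset.range (k+1), (k.choose g : ℂ) • (R ^ g * x (k+1-g))
     = ∑ g ∈ Finset.range (k+1), (k.choose (g+1) : ℂ) • (R ^ (g+1) * x (k+1-(g+1)))
       + x (k+1) := by
    rw [Finset.sum_range_succ', Finset.sum_range_succ _ k]
    simp
  have h2 : R * ∑ g ∈ Finset.range (k+1), (k.choose g : ℂ) • (R ^ g * x (k-g))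
     = ∑ g ∈ Finset.range (k+1), (k.choose g : ℂ) • (R ^ (g+1) * x (k+1-(g+1))) := by
    rw [Finset.mul_sum]
    refine Finset.sum_congr rfl fun g _ => ?_
    rw [mul_smul_comm, ← mul_assoc, ← pow_succ', Nat.add_sub_add_right]
  rw [h1, h2]
  simp
  abel

lemma pascal_A {T : Type} [Ring T] [Algebra ℂ T] (R S : T) (hRS : R * S = S * R) (k j : ℕ) :
    ∑ g ∈ Finset.range (j+2), ((k+1).choose g : ℂ) • (R ^ g * S ^ (j+1-g)) =
      (S + R) * ∑ g ∈ Finset.range (j+1), (k.choose g : ℂ) • (R ^ g * S ^ (j-g))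
      + (k.choose (j+1) : ℂ) • R ^ (j+1) := by
  have hc : ∀ g, S * R ^ g = R ^ g * S := fun g => ((Commute.pow_left (hRS : Commute R S) g).eq).symm
  have h0 : S * ∑ g ∈ Finset.range (j+1), (k.choose g : ℂ) • (R ^ g * S ^ (j-g))
      + (k.choose (j+1) : ℂ) • R ^ (j+1)
      = ∑ g ∈ Finset.range (j+2), (k.choose g : ℂ) • (R ^ g * S ^ (j+1-g)) := by
    rw [Finset.sum_range_succ _ (j+1), Finset.mul_sum]
    congr 1
    · refine Finset.sum_congr rfl fun g hg => ?_
      rw [mul_smul_comm, ← mul_assoc, hc, mul_assoc, ← pow_succ']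
      congr 3
      have := Finset.mem_range.1 hg
      omega
    · simp
  have h1 : R * ∑ g ∈ Finset.range (j+1), (k.choose g : ℂ) • (R ^ g * S ^ (j-g))
     = ∑ g ∈ Finset.range (j+1), (k.choose g : ℂ) • (R ^ (g+1) * S ^ (j+1-(g+1))) := by
    rw [Finset.mul_sum]
    refine Finset.sum_congr rfl fun g _ => ?_
    rw [mul_smul_comm, ← mul_assoc, ← pow_succ', Nat.add_sub_add_right]
  rw [add_mul, add_right_comm, h0, h1, Finset.sum_range_succ', Finset.sum_range_succ' _ (j+1)]
  simp only [Nat.choose_succ_succ, Nat.cast_add, add_smul, Finset.sum_add_distrib]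
  simp
  abel

/-! ### operators -/

section ops
variable {m n : ℕ}

lemma mkOp_fmono {M : Type} [AddCommGroup M] [Module ℂ M] (g : FMon m n → M) (x : FMon m n) :
    mkOp g (fmono x) = g x := by
  simp [mkOp, fmono]

lemma op_ext {f g : Module.End ℂ (FSp m n)} (h : ∀ x, f (fmono x) = g (fmono x)) : f = g := by
  apply Finsupp.lhom_ext
  intro x c
  have : (Finsupp.single x c : FSp m n) = c • fmono x := by simp [fmono]
  rw [this, map_smul, map_smul, h]

lemma cntB_update (b : Fin n → Bool) (i j : Fin n) (hij : i ≠ j) (v : Bool) (hv : b i = !v) :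
    (-1 : ℂ) ^ cntB (Function.update b i v) j = (if i < j then -1 else 1) * (-1) ^ cntB b j := by
  have key : ∀ b : Fin n → Bool, (-1 : ℂ) ^ cntB b j
      = ∏ t, (if t < j ∧ b t = true then (-1 : ℂ) else 1) := by
    intro b
    rw [cntB, Finset.prod_ite]
    simp
  rw [key, key, ← Finset.mul_prod_erase _ _ (Finset.mem_univ i),
    ← Finset.mul_prod_erase Finset.univ (fun t => if t < j ∧ b t = true then (-1 : ℂ) else 1)
      (Finset.mem_univ i), ← mul_assoc]
  congr 1
  · cases v <;> simp_all
  · refine Finset.prod_congr rfl fun t ht => ?_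
    rw [Function.update_of_ne (Finset.ne_of_mem_erase ht)]

lemma cntB_update_self (b : Fin n → Bool) (i : Fin n) (v : Bool) :
    cntB (Function.update b i v) i = cntB b i := by
  unfold cntB
  congr 1
  ext j
  simp only [Finset.mem_filter, Finset.mem_univ, true_and]
  constructor <;> rintro ⟨h1, h2⟩ <;> refine ⟨h1, ?_⟩ <;> simpa [Function.update_of_ne h1.ne] using h2

lemma opDivE_f (i : Fin m) (x : FMon m n) : opDivE i (fmono x) =
    fmono (x.1 - 1, Function.update x.2.1 i (x.2.1 i + 1), x.2.2) := mkOp_fmono _ _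
lemma opDivO_f (i : Fin n) (x : FMon m n) : opDivO i (fmono x) = if x.2.2 i then 0 else
    ((-1 : ℂ) ^ (cntB x.2.2 i)) • fmono (x.1 - 1, x.2.1, Function.update x.2.2 i true) :=
  mkOp_fmono _ _
lemma opPar0_f (x : FMon m n) : opPar0 (fmono x) = (x.1 : ℂ) • fmono x := mkOp_fmono _ _
lemma opParE_f (i : Fin m) (x : FMon m n) : opParE i (fmono x) =
    (x.2.1 i : ℂ) • fmono (x.1 + 1, Function.update x.2.1 i (x.2.1 i - 1), x.2.2) :=
  mkOp_fmono _ _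
lemma opParO_f (i : Fin n) (x : FMon m n) : opParO i (fmono x) = if x.2.2 i then
    ((-1 : ℂ) ^ (cntB x.2.2 i)) • fmono (x.1 + 1, x.2.1, Function.update x.2.2 i false) else 0 :=
  mkOp_fmono _ _

lemma sq_sgn (k : ℕ) : ((-1 : ℂ) ^ k) * (-1) ^ k = 1 := by
  rw [← pow_add, Even.neg_one_pow ⟨k, rfl⟩]

lemma upd_self (b : Fin n → Bool) (i : Fin n) (v : Bool) (h : b i = v) :
    Function.update b i v = b := by subst h; simp

lemma opPar_l (c : Fin m) : opPar (emb (Sum.inl c) : Ind (m+1) n) = opParE c := rfl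
lemma opPar_r (c : Fin n) : opPar (emb (Sum.inr c) : Ind (m+1) n) = opParO c := rfl
lemma opDiv_l (c : Fin m) : opDiv (Sum.inl c : Ind m n) = opDivE c := rfl
lemma opDiv_r (c : Fin n) : opDiv (Sum.inr c : Ind m n) = opDivO c := rfl

lemma op_comm (c j : Ind m n) :
    opPar (emb c) * opDiv j = ((-1 : ℂ) ^ (pI c * pI j)) • (opDiv j * opPar (emb c))
      + (if c = j then 1 else 0) := by
  apply op_ext
  rintro ⟨z, e, b⟩
  rcases c with c | c <;> rcases j with j | j
  · simp only [opPar_l, opPar_r, opDiv_l, opDiv_r, LinearMap.add_apply, LinearMap.smul_apply, Module.End.mul_apply]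
    simp only [opDivE_f, opParE_f, map_smul, pI, Sum.elim_inl, mul_zero, pow_zero, one_smul,
      Sum.inl.injEq]
    by_cases h : c = j
    · subst h
      simp
      rcases Nat.eq_zero_or_pos (e c) with h0 | h0
      · simp [h0]
      · rw [Nat.sub_add_cancel h0]
        simp [add_smul]
    · simp [h, Function.update_of_ne (Ne.symm h), Function.update_of_ne h]
      rw [Function.update_comm h]
  · simp only [opPar_l, opPar_r, opDiv_l, opDiv_r, LinearMap.add_apply, LinearMap.smul_apply, Module.End.mul_apply]
    simp only [opDivO_f, opParE_f, map_smul, pI, Sum.elim_inl, Sum.elim_inr, zero_mul, pow_zero,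
      one_smul, apply_ite, map_zero]
    simp
    split_ifs <;> simp [smul_smul, mul_comm]
  · simp only [opPar_l, opPar_r, opDiv_l, opDiv_r, LinearMap.add_apply, LinearMap.smul_apply, Module.End.mul_apply]
    simp only [opDivE_f, opParO_f, map_smul, pI, Sum.elim_inl, Sum.elim_inr, mul_zero, pow_zero,
      one_smul, apply_ite, map_zero]
    simp
  · simp only [opPar_l, opPar_r, opDiv_l, opDiv_r, LinearMap.add_apply, LinearMap.smul_apply, Module.End.mul_apply]
    simp only [opDivO_f, opParO_f, pI, Sum.elim_inr, mul_one, pow_one, Sum.inr.injEq]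
    by_cases h : c = j
    · subst h
      cases hb : b c
      · simp [opParO_f, cntB_update_self, smul_smul, sq_sgn, upd_self _ _ _ hb]
      · simp [opDivO_f, cntB_update_self, smul_smul, sq_sgn, upd_self _ _ _ hb]
    · cases hb : b c <;> cases hb' : b j <;>
        simp [h, hb, hb', opDivO_f, opParO_f, Function.update_of_ne (Ne.symm h),
          Function.update_of_ne h, smul_smul]
      rw [cntB_update b j c (Ne.symm h) true (by simp [hb']),
        cntB_update b c j h false (by simp [hb]), Function.update_comm h, ← neg_smul]
      congr 1
      rcases lt_or_gt_of_ne h with h1 | h1 <;> simp [h1, h1.not_gt, mul_comm]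

def degM (x : FMon m n) : ℂ := (x.1 : ℂ) + ∑ i, (x.2.1 i : ℂ) + ∑ i, (if x.2.2 i then 1 else 0)

lemma coe_En : (En m n : Module.End ℂ (FSp m n)) =
    opPar0 + (∑ i : Fin m, opDivE i * opParE i + ∑ i : Fin n, opDivO i * opParO i) := by
  unfold En
  rw [sum_emb, Fintype.sum_sum_type]
  simp only [AddSubmonoidClass.coe_finsetSum, Subalgebra.coe_add]
  congr 1

lemma En_apply (x : FMon m n) : (En m n : Module.End ℂ (FSp m n)) (fmono x) = degM x • fmono x := by
  rw [coe_En]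
  obtain ⟨z, e, b⟩ := x
  simp only [LinearMap.add_apply, LinearMap.sum_apply, Module.End.mul_apply, degM, add_smul,
    Finset.sum_smul, ← add_assoc]
  congr 1
  · congr 1
    · exact opPar0_f _
    · refine Finset.sum_congr rfl fun i _ => ?_
      simp only [opParE_f, map_smul, opDivE_f]
      rcases Nat.eq_zero_or_pos (e i) with h0 | h0
      · simp [h0]
      · simp [Nat.sub_add_cancel h0]
  · refine Finset.sum_congr rfl fun i _ => ?_
    by_cases hb : b i = true
    swap
    · simp [opParO_f, hb]
    · simp [opParO_f, opDivO_f, hb, cntB_update_self, smul_smul, sq_sgn, upd_self _ _ _ hb]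

lemma comm_of_deg (f : Module.End ℂ (FSp m n))
    (h : ∀ x, f (fmono x) = 0 ∨ ∃ (c : ℂ) (y : FMon m n), f (fmono x) = c • fmono y ∧ degM y = degM x) :
    Commute (En m n : Module.End ℂ (FSp m n)) f := by
  apply op_ext
  intro x
  simp only [Module.End.mul_apply, En_apply, map_smul]
  rcases h x with h | ⟨c, y, h, hd⟩
  · simp [h]
  · rw [h, map_smul, En_apply, hd, smul_comm]

lemma sum_upd {N : ℕ} {β : Type} (e : Fin N → β) (i : Fin N) (v : β) (f : β → ℂ) :
    ∑ t, f (Function.update e i v t) = ∑ t, f (e t) - f (e i) + f v := by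
  rw [← Finset.add_sum_erase _ _ (Finset.mem_univ i),
    ← Finset.add_sum_erase Finset.univ (fun t => f (e t)) (Finset.mem_univ i),
    Finset.sum_congr rfl fun t ht => by
      rw [Function.update_of_ne (Finset.ne_of_mem_erase ht)]]
  simp
  ring

lemma En_div (j : Ind m n) : Commute (En m n : Module.End ℂ (FSp m n)) (opDiv j) := by
  apply comm_of_deg
  rintro ⟨z, e, b⟩
  rcases j with j | j
  · refine Or.inr ⟨1, _, (opDivE_f j _).trans (one_smul _ _).symm, ?_⟩
    simp only [degM]
    rw [sum_upd e j _ (fun v : ℕ => (v : ℂ))]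
    push_cast
    ring
  · cases hb : b j
    · refine Or.inr ⟨_, _, (opDivO_f j _).trans (by simp only [hb]; rfl), ?_⟩
      simp only [degM]
      rw [sum_upd b j _ (fun v : Bool => if v then (1 : ℂ) else 0), hb]
      push_cast
      simp
      ring
    · exact Or.inl ((opDivO_f j _).trans (by simp [hb]))

lemma En_par (j : Ind (m+1) n) : Commute (En m n : Module.End ℂ (FSp m n)) (opPar j) := by
  apply comm_of_deg
  rintro ⟨z, e, b⟩
  rcases j with j | j
  · refine Fin.cases ?_ (fun j => ?_) j
    · exact Or.inr ⟨_, _, opPar0_f _, rfl⟩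
    · rcases Nat.eq_zero_or_pos (e j) with h0 | h0
      · exact Or.inl ((opParE_f j _).trans (by simp [h0]))
      · refine Or.inr ⟨_, _, opParE_f j _, ?_⟩
        simp only [degM]
        rw [sum_upd e j _ (fun v : ℕ => (v : ℂ)), Nat.cast_sub h0]
        push_cast
        ring
  · cases hb : b j
    · exact Or.inl ((opParO_f j _).trans (by simp [hb]))
    · refine Or.inr ⟨_, _, (opParO_f j _).trans (by simp only [hb]; rfl), ?_⟩
      simp only [degM]
      rw [sum_upd b j _ (fun v : Bool => if v then (1 : ℂ) else 0), hb]
      push_cast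
      simp
      ring

end ops

section st
variable {m n : ℕ} (ST : SuperTensor m n)

lemma tpar_tdiv (c j : Ind m n) :
    tpar (emb c) * tdiv j = ((-1 : ℂ) ^ (pI c * pI j)) • (tdiv j * tpar (emb c))
      + (if c = j then 1 else 0) := by
  apply Subtype.ext
  have := op_comm c j
  by_cases h : c = j
  · simp only [h, if_true] at this ⊢
    exact this
  · simp only [h, if_false] at this ⊢
    exact this

lemma tdivB_emb (c : Ind m n) : tdivB (emb c) = tdiv c := by cases c <;> rfl
lemma tdivB_z0 : tdivB (z0 : Ind (m+1) n) = 1 := rfl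
lemma tdel_emb (c : Ind m n) (b : Ind (m+1) n) : tdel (emb c) b = tdiv c * tpar b := by
  rw [tdel, tdivB_emb]
lemma tdel_z0 (b : Ind (m+1) n) : tdel z0 b = tpar b := by
  rw [tdel, tdivB_z0, one_mul]

lemma En_eq : En m n = tpar z0 + ∑ c : Ind m n, tdiv c * tpar (emb c) := by
  rw [En, sum_emb, tdel_z0]
  simp only [tdel_emb]

lemma ptD_eq (c j : Ind m n) : ptD c j = tpar (emb c) * tdiv j := by
  rw [ptD, tpar_tdiv, tdel_emb]

lemma En_comm (x : Dprime m n) : Commute (En m n) x := by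
  have h : ∀ y ∈ Dprime m n, Commute (En m n : Module.End ℂ (FSp m n)) y := by
    intro y hy
    induction hy using Algebra.adjoin_induction with
    | mem y hy =>
      rcases hy with ⟨j, rfl⟩ | ⟨j, rfl⟩
      · exact En_div j
      · exact En_par j
    | algebraMap r => exact (Algebra.commutes r _).symm
    | add x y _ _ hx hy => exact hx.add_right hy
    | mul x y _ _ hx hy => exact hx.mul_right hy
  exact Subtype.ext (h x.1 x.2)

lemma U_ind {P : UEA (Ind m n) pI → Prop} (hg : ∀ i j, P (gen pI i j))
    (ha : ∀ r : ℂ, P (algebraMap ℂ _ r)) (hadd : ∀ x y, P x → P y → P (x + y))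
    (hmul : ∀ x y, P x → P y → P (x * y)) (u : UEA (Ind m n) pI) : P u := by
  obtain ⟨w, rfl⟩ := RingQuot.mkAlgHom_surjective ℂ (glRel (Ind m n) pI) u
  induction w using FreeAlgebra.induction with
  | grade0 r => simpa using ha r
  | grade1 x => exact hg x.1 x.2
  | mul a b ha hb => rw [map_mul]; exact hmul _ _ ha hb
  | add a b ha hb => rw [map_add]; exact hadd _ _ ha hb

lemma En_commU (u : UEA (Ind m n) pI) : Commute (ST.inD (En m n)) (ST.inU u) := by
  induction u using U_ind with
  | hg i j =>
    rw [En_eq, map_add, map_sum]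
    refine Commute.add_left ?_ (Commute.sum_left _ _ _ fun c _ => ?_)
    · have := ST.comm_par i j z0
      rw [pI_z0, mul_zero, pow_zero, one_smul] at this
      exact this.symm
    · have h1 := ST.comm_par i j (emb c)
      have h2 := ST.comm_div i j c
      rw [pI_emb] at h1
      rw [map_mul]
      change _ = _
      rw [← mul_assoc (ST.inU _), h2, smul_mul_assoc, mul_assoc, mul_assoc, h1, mul_smul_comm,
        smul_smul, sq_sgn, one_smul]
  | ha r => rw [AlgHom.commutes]; exact (Algebra.commutes r _).symm
  | hadd x y hx hy => rw [map_add]; exact hx.add_right hy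
  | hmul x y hx hy => rw [map_mul]; exact hx.mul_right hy

lemma R2_comm (x : ST.T) : Commute (R2elt ST) x := by
  unfold R2elt
  refine Commute.add_left ?_ ((Commute.one_left x).smul_left _)
  obtain ⟨t, rfl⟩ := ST.equiv.surjective x
  induction t using TensorProduct.induction_on with
  | zero => rw [map_zero]; exact Commute.zero_right _
  | tmul d u =>
    rw [ST.equiv_tmul]
    exact ((En_comm d).map ST.inD).mul_right (En_commU ST u)
  | add x y hx hy => rw [map_add]; exact hx.add_right hy

/-- shorthand for `t_i/t_0 ⊗ 1` -/
abbrev dd (c : Ind m n) : ST.T := ST.inD (tdiv c)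
/-- shorthand for `t_0 ∂_i ⊗ 1` -/
abbrev qq (c : Ind (m+1) n) : ST.T := ST.inD (tpar c)
/-- shorthand for `1 ⊗ r_k` -/
abbrev rr (k : ℕ) (a b : Ind m n) : ST.T := ST.inU (rElt (gen pI) pI k a b)
/-- shorthand for sign -/
abbrev sg (c : Ind m n) : ℂ := (-1 : ℂ) ^ pI c

lemma R2_eq : R2elt ST = qq ST z0 + ∑ c : Ind m n, sg c • (qq ST (emb c) * dd ST c) := by
  have h : ∀ c : Ind m n, sg c • (qq ST (emb c) * dd ST c)
      = dd ST c * qq ST (emb c) + sg c • (1 : ST.T) := by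
    intro c
    have hp : pI c * pI c = pI c := by cases c <;> rfl
    simp only [sg]
    rw [← map_mul, tpar_tdiv, if_pos rfl, map_add, map_smul, map_mul, map_one, smul_add, smul_smul,
      hp, sq_sgn, one_smul]
  rw [Finset.sum_congr rfl fun c _ => h c, Finset.sum_add_distrib, R2elt, En_eq, map_add, map_sum,
    ← add_assoc]
  simp only [map_mul]
  congr 1
  rw [← Finset.sum_smul, Fintype.sum_sum_type]
  simp [sg, pI]
  rw [sub_eq_add_neg, add_smul, neg_smul]

variable {R : ST.T} {φ : UEA (Ind (m+1) n) pI →ₐ[ℂ] ST.T}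

lemma cancel0 (hφ : IsPhi ST R φ) (Y : ST.T) :
    φ (gen pI z0 z0) * Y + ∑ c : Ind m n, sg c • (φ (gen pI z0 (emb c)) * (dd ST c * Y))
      = (R2elt ST + R) * Y := by
  rw [hφ.2.2.2, R2_eq, add_right_comm, add_mul _ _ Y, add_mul _ _ Y, add_mul _ _ Y, Finset.sum_mul,
    tdel_z0]
  simp only [hφ.2.2.1, tdel_z0, smul_mul_assoc, mul_assoc]

lemma phi_a0 (hφ : IsPhi ST R φ) (a : Ind m n) :
    φ (gen pI (emb a) z0) = dd ST a * qq ST z0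
     - ∑ j : Ind m n, ((-1 : ℂ) ^ (pI a * pI j)) • (dd ST j * ST.inU (gen pI a j)) := by
  rw [hφ.2.1, tdel_emb, map_mul]

lemma sum_phi_ac (hφ : IsPhi ST R φ) (a : Ind m n) (Y : Ind m n → ST.T) :
    ∑ c : Ind m n, sg c • (φ (gen pI (emb a) (emb c)) * Y c)
      = dd ST a * ∑ c : Ind m n, sg c • (qq ST (emb c) * Y c)
        + ∑ c : Ind m n, sg c • (ST.inU (gen pI a c) * Y c) + R * Y a := by
  simp only [hφ.1, tdel_emb, map_mul, add_mul, smul_add, Finset.sum_add_distrib, Finset.mul_sum,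
    mul_smul_comm, mul_assoc]
  congr 1
  have : ∀ c : Ind m n, sg c • ((if a = c then ((-1 : ℂ) ^ (pI a * pI c)) • R else 0) * Y c)
     = if c = a then R * Y a else 0 := by
    intro c
    by_cases h : c = a
    · subst h
      have hp : pI c * pI c = pI c := by cases c <;> rfl
      simp only [sg, if_true, smul_mul_assoc, smul_smul, hp, sq_sgn, one_smul]
    · simp [h, Ne.symm h]
  rw [Finset.sum_congr rfl fun c _ => this c]
  simp

lemma sgn_u (a c j : Ind m n) (Y : ST.T) :
    sg c • (ST.inU (gen pI a c) * (((-1 : ℂ) ^ (pI c * pI j)) • (dd ST j * Y)))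
      = ((-1 : ℂ) ^ (pI a * pI j)) • (dd ST j * (sg c • (ST.inU (gen pI a c) * Y))) := by
  rw [mul_smul_comm, ← mul_assoc, ST.comm_div]
  simp only [smul_mul_assoc, mul_smul_comm, smul_smul, mul_assoc]
  congr 1
  simp only [sg, add_mul, pow_add]
  have := sq_sgn (pI c * pI j)
  linear_combination (-1 : ℂ) ^ pI c * (-1) ^ (pI a * pI j) * this

lemma cancelA (hφ : IsPhi ST R φ) (hR : ∀ x, Commute R x) (a : Ind m n) (Y : ST.T) :
    φ (gen pI (emb a) z0) * Y + ∑ c : Ind m n, sg c • (φ (gen pI (emb a) (emb c)) * (dd ST c * Y))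
      = dd ST a * ((R2elt ST + R) * Y) := by
  rw [phi_a0 ST hφ, sum_phi_ac ST hφ]
  have h : ∑ c : Ind m n, sg c • (ST.inU (gen pI a c) * (dd ST c * Y))
      = (∑ j : Ind m n, ((-1 : ℂ) ^ (pI a * pI j)) • (dd ST j * ST.inU (gen pI a j))) * Y := by
    rw [Finset.sum_mul]
    refine Finset.sum_congr rfl fun c _ => ?_
    rw [← mul_assoc, ST.comm_div, smul_mul_assoc, smul_mul_assoc, smul_smul]
    congr 1
    have hp : pI c * pI c = pI c := by cases c <;> rfl
    simp only [sg, add_mul, pow_add, hp]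
    linear_combination (-1 : ℂ) ^ (pI a * pI c) * sq_sgn (pI c)
  have h2 : R * (dd ST a * Y) = dd ST a * (R * Y) := by
    rw [← mul_assoc, (hR _).eq, mul_assoc]
  rw [h, h2, R2_eq]
  simp only [add_mul, sub_mul, mul_add, Finset.sum_mul, smul_mul_assoc, mul_assoc]
  abel

/-- `G_k` -/
def GkT (R : ST.T) (k : ℕ) : ST.T :=
  AkT ST R k 1 * qq ST z0 - ∑ s ∈ Finset.Icc 2 k, AkT ST R k s * BT ST s

/-- `h_l(a)` -/
def hl (l : ℕ) (a : Ind m n) : ST.T :=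
  ∑ j : Ind m n, ((-1 : ℂ) ^ (pI a * pI j)) • (dd ST j * rr ST l a j)

lemma rr_rec (k : ℕ) (a b : Ind m n) :
    rr ST (k+1) a b = ∑ c : Ind m n, sg c • (ST.inU (gen pI a c) * rr ST k c b) := by
  simp only [rr, rElt_rec, map_sum, map_smul, map_mul]

lemma hl_rec (l : ℕ) (a : Ind m n) :
    hl ST (l+1) a = ∑ c : Ind m n, sg c • (ST.inU (gen pI a c) * hl ST l c) := by
  simp only [hl, Finset.mul_sum, Finset.smul_sum, sgn_u, rr_rec]
  rw [Finset.sum_comm]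

lemma BT_eq (s : ℕ) (hs : 2 ≤ s) :
    BT ST s = ∑ c : Ind m n, sg c • (qq ST (emb c) * hl ST (s-1) c) := by
  unfold BT hl
  refine Finset.sum_congr rfl fun i _ => ?_
  rw [Finset.mul_sum, Finset.smul_sum]
  refine Finset.sum_congr rfl fun j _ => ?_
  rw [ptD_eq, map_mul, mul_smul_comm, smul_smul, mul_assoc, sg, ← pow_add, mul_add, mul_one]

lemma fs_eq (s : ℕ) (a : Ind m n) (b : Ind m n) :
    fsT ST s (emb a) b = dd ST a * fsT ST s z0 b := by
  simp only [fsT, tdel_emb, tdel_z0, map_mul, Finset.mul_sum, mul_smul_comm, mul_assoc]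

lemma Fk_eq (k : ℕ) (a : Ind m n) (b : Ind m n) :
    FkT ST R k (emb a) b = dd ST a * FkT ST R k z0 b := by
  simp only [FkT, fs_eq, Finset.mul_sum, mul_assoc]

lemma Ak_comm (hR : ∀ x, Commute R x) (k s : ℕ) (x : ST.T) : Commute (AkT ST R k s) x := by
  unfold AkT
  refine Commute.sum_left _ _ _ fun g _ => Commute.smul_left ?_ _
  exact ((hR x).pow_left g).mul_left ((R2_comm ST x).pow_left _)

lemma Ak_rec (hR : ∀ x, Commute R x) (k s : ℕ) (hs : s ≤ k) :
    AkT ST R (k+1) s = (R2elt ST + R) * AkT ST R k s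
      + (k.choose (k+1-s) : ℂ) • R ^ (k+1-s) := by
  obtain ⟨j, rfl⟩ := Nat.exists_eq_add_of_le hs
  have h1 : s + j + 1 - s = j + 1 := by omega
  have h2 : s + j - s = j := by omega
  unfold AkT
  rw [h1, h2]
  exact pascal_A R (R2elt ST) (hR _).eq (s+j) j

lemma Ak_self (k : ℕ) : AkT ST R k k = 1 := by
  simp [AkT]

lemma sum_flip (k l : ℕ) (f : ℕ → ST.T) :
    ∑ g ∈ Finset.range (k + 1 - l), f (k - g + 1) = ∑ s ∈ Finset.Icc (l+1) (k+1), f s := by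
  refine Finset.sum_bij' (fun g _ => k - g + 1) (fun s _ => k + 1 - s) ?_ ?_ ?_ ?_ ?_ <;>
    simp <;> omega

lemma D_rec (hR : ∀ x, Commute R x) (k : ℕ) (a b : Ind m n) :
    DkT ST R (k+1) a b = ∑ c : Ind m n, sg c • (ST.inU (gen pI a c) * DkT ST R k c b)
      + R * DkT ST R k a b := by
  unfold DkT
  rw [pascal_conv R (fun l => rr ST l a b) k]
  congr 1
  simp only [Finset.mul_sum, Finset.smul_sum]
  rw [Finset.sum_comm]
  refine Finset.sum_congr rfl fun g hg => ?_
  have : k + 1 - g = (k - g) + 1 := by have := Finset.mem_range.1 hg; omega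
  rw [this, rr_rec, Finset.mul_sum, Finset.smul_sum]
  refine Finset.sum_congr rfl fun c _ => ?_
  simp only [mul_smul_comm, ← mul_assoc, ((hR (ST.inU (gen pI a c))).pow_left g).eq]
  rw [smul_comm]

lemma E_ext (k : ℕ) (a : Ind m n) : EkT ST R k a =
    ∑ g ∈ Finset.range (k+1), (k.choose g : ℂ) •
      (R ^ g * (fun l => if l = 0 then 0 else hl ST l a) (k-g)) := by
  rw [Finset.sum_range_succ]
  simp only [Nat.sub_self, if_true, mul_zero, smul_zero, add_zero]
  refine Finset.sum_congr rfl fun g hg => ?_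
  have : k - g ≠ 0 := by have := Finset.mem_range.1 hg; omega
  rw [if_neg this]
  rfl

lemma E_rec (hR : ∀ x, Commute R x) (k : ℕ) (a : Ind m n) :
    EkT ST R (k+1) a = hl ST 1 a * R ^ k
      + ∑ c : Ind m n, sg c • (ST.inU (gen pI a c) * EkT ST R k c) + R * EkT ST R k a := by
  rw [E_ext, pascal_conv R (fun l => if l = 0 then 0 else hl ST l a) k, ← E_ext]
  congr 1
  rw [Finset.sum_range_succ, add_comm]
  congr 1
  · simp [((hR (hl ST 1 a)).pow_left k).eq]
  · simp only [EkT, Finset.mul_sum (Finset.range k), Finset.smul_sum]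
    rw [Finset.sum_comm]
    refine Finset.sum_congr rfl fun g hg => ?_
    have : k + 1 - g = (k - g) + 1 := by have := Finset.mem_range.1 hg; omega
    rw [this, if_neg (Nat.succ_ne_zero _), hl_rec, Finset.mul_sum, Finset.smul_sum]
    refine Finset.sum_congr rfl fun c _ => ?_
    change _ = sg c • (_ * _ • (_ * hl ST (k-g) c))
    simp only [mul_smul_comm, ← mul_assoc, ((hR (ST.inU (gen pI a c))).pow_left g).eq]
    rw [smul_comm]

lemma F_rec (hR : ∀ x, Commute R x) (k : ℕ) (b : Ind m n) :
    FkT ST R (k+1) z0 b = (R2elt ST + R) * FkT ST R k z0 b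
      + ∑ c : Ind m n, sg c • (qq ST (emb c) * DkT ST R k c b) := by
  have h : ∑ c : Ind m n, sg c • (qq ST (emb c) * DkT ST R k c b)
      = ∑ s ∈ Finset.Icc 1 (k+1), fsT ST s z0 b * ((k.choose (k+1-s) : ℂ) • R ^ (k+1-s)) := by
    rw [← sum_flip ST k 0 (fun s => fsT ST s z0 b * ((k.choose (k+1-s) : ℂ) • R ^ (k+1-s)))]
    simp only [DkT, Finset.mul_sum, Finset.smul_sum]
    rw [Finset.sum_comm]
    refine Finset.sum_congr rfl fun g hg => ?_
    have : k + 1 - (k - g + 1) = g := by have := Finset.mem_range.1 hg; omega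
    rw [this, fsT, Finset.sum_mul]
    refine Finset.sum_congr rfl fun c _ => ?_
    rw [tdel_z0, Nat.add_sub_cancel, ((hR _).pow_left g).eq]
    simp only [mul_smul_comm, smul_mul_assoc, mul_assoc]
    rw [smul_comm]
  rw [h, FkT, FkT, Finset.sum_Icc_succ_top (by omega), Finset.sum_Icc_succ_top (by omega), Ak_self,
    ← add_assoc, Finset.mul_sum, ← Finset.sum_add_distrib]
  congr 1
  · refine Finset.sum_congr rfl fun s hs => ?_
    rw [Ak_rec ST hR k s (Finset.mem_Icc.1 hs).2, mul_add, ← mul_assoc, ← mul_assoc,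
      (((R2_comm ST (fsT ST s z0 b)).add_left (hR _)).eq)]
  · simp

lemma G_rec (hR : ∀ x, Commute R x) (k : ℕ) (hk : 0 < k) :
    GkT ST R (k+1) = (R2elt ST + R) * GkT ST R k + qq ST z0 * R ^ k
      - ∑ c : Ind m n, sg c • (qq ST (emb c) * EkT ST R k c) := by
  have h : ∑ c : Ind m n, sg c • (qq ST (emb c) * EkT ST R k c)
      = ∑ s ∈ Finset.Icc 2 (k+1), ((k.choose (k+1-s) : ℂ) • R ^ (k+1-s)) * BT ST s := by
    rw [← sum_flip ST k 1 (fun s => ((k.choose (k+1-s) : ℂ) • R ^ (k+1-s)) * BT ST s)]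
    simp only [EkT, Finset.mul_sum (Finset.range k), Finset.smul_sum]
    rw [Finset.sum_comm]
    refine Finset.sum_congr rfl fun g hg => ?_
    have hg' := Finset.mem_range.1 hg
    have : k + 1 - (k - g + 1) = g := by omega
    rw [this, BT_eq _ _ (by omega), Finset.mul_sum]
    refine Finset.sum_congr rfl fun c _ => ?_
    change sg c • (_ * _ • (_ * hl ST (k-g) c)) = _
    rw [Nat.add_sub_cancel]
    simp only [mul_smul_comm, smul_mul_assoc, ← mul_assoc, ((hR (qq ST (emb c))).pow_left g).eq]
  have h3 : ∑ s ∈ Finset.Icc 2 (k+1), AkT ST R (k+1) s * BT ST s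
      = (R2elt ST + R) * ∑ s ∈ Finset.Icc 2 k, AkT ST R k s * BT ST s
       + ∑ s ∈ Finset.Icc 2 (k+1), ((k.choose (k+1-s) : ℂ) • R ^ (k+1-s)) * BT ST s := by
    rw [Finset.sum_Icc_succ_top (by omega), Finset.sum_Icc_succ_top (by omega), Ak_self,
      ← add_assoc, Finset.mul_sum, ← Finset.sum_add_distrib]
    congr 1
    · refine Finset.sum_congr rfl fun s hs => ?_
      rw [Ak_rec ST hR k s (Finset.mem_Icc.1 hs).2, add_mul, mul_assoc]
    · simp
  rw [h, GkT, GkT, h3, Ak_rec ST hR k 1 hk]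
  simp only [Nat.add_sub_cancel, Nat.choose_self, Nat.cast_one, one_smul]
  rw [add_mul, ((hR (qq ST z0)).pow_left k).eq, mul_sub, mul_assoc]
  abel

lemma phi_rec (x y : Ind (m+1) n) (k : ℕ) :
    φ (rElt (gen pI) pI (k+1) x y) = φ (gen pI x z0) * φ (rElt (gen pI) pI k z0 y)
      + ∑ c : Ind m n, sg c • (φ (gen pI x (emb c)) * φ (rElt (gen pI) pI k (emb c) y)) := by
  rw [rElt_rec, map_sum, sum_emb]
  simp only [map_smul, map_mul, pI_emb, pI_z0, pow_zero, one_smul]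

lemma rElt_one {ι A : Type} [Fintype ι] [DecidableEq ι] [Ring A] [Algebra ℂ A]
    (e : ι → ι → A) (p : ι → ℕ) (a b : ι) : rElt e p 1 a b = e a b := by
  simp [rElt, chainF]
  rfl

lemma main_all (hφ : IsPhi ST R φ) (hR : ∀ x, Commute R x) (k : ℕ) :
    (∀ a b : Ind m n, φ (rElt (gen pI) pI (k+1) (emb a) (emb b))
      = dd ST a * FkT ST R (k+1) z0 b + DkT ST R (k+1) a b) ∧
    (∀ a : Ind m n, φ (rElt (gen pI) pI (k+1) (emb a) z0)
      = dd ST a * GkT ST R (k+1) - EkT ST R (k+1) a) ∧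
    (∀ b : Ind m n, φ (rElt (gen pI) pI (k+1) z0 (emb b)) = FkT ST R (k+1) z0 b) ∧
    (φ (rElt (gen pI) pI (k+1) z0 z0) = GkT ST R (k+1) + R ^ (k+1)) := by
  induction k with
  | zero =>
    have hF : ∀ b, FkT ST R 1 z0 b = qq ST (emb b) := by
      intro b
      rw [F_rec ST hR 0 b]
      have : ∀ c : Ind m n, sg c • (qq ST (emb c) * DkT ST R 0 c b)
          = if c = b then qq ST (emb b) else 0 := by
        intro c
        by_cases h : c = b
        · subst h
          have hp : pI c * pI c = pI c := by cases c <;> rfl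
          simp [DkT, rElt, sg, hp, smul_smul, sq_sgn]
        · simp [DkT, rElt, h]
      rw [Finset.sum_congr rfl fun c _ => this c]
      simp [FkT]
    have hG : GkT ST R 1 = qq ST z0 := by simp [GkT, Ak_self]
    have hE : ∀ a, EkT ST R 1 a
        = ∑ j : Ind m n, ((-1 : ℂ) ^ (pI a * pI j)) • (dd ST j * ST.inU (gen pI a j)) := by
      intro a
      simp [EkT, rElt_one]
    simp only [zero_add, rElt_one, hF, hG, hE, pow_one]
    refine ⟨fun a b => ?_, fun a => phi_a0 ST hφ a, fun b => ?_, ?_⟩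
    · rw [hφ.1, tdel_emb, map_mul, add_assoc]
      congr 1
      simp only [DkT, Finset.sum_range_succ, Finset.sum_range_zero, Nat.sub_zero, Nat.sub_self, rElt_one]
      simp only [rElt]
      split_ifs <;> simp [*]
    · rw [hφ.2.2.1, tdel_z0]
    · rw [hφ.2.2.2, tdel_z0]
  | succ k ih =>
    obtain ⟨i1, i2, i3, i4⟩ := ih
    refine ⟨fun a b => ?_, fun a => ?_, fun b => ?_, ?_⟩
    · rw [phi_rec, i3]
      simp only [i1, mul_add, smul_add, Finset.sum_add_distrib]
      rw [← add_assoc, cancelA ST hφ hR, sum_phi_ac ST hφ, F_rec ST hR (k+1), D_rec ST hR (k+1)]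
      rw [mul_add]
      abel
    · rw [phi_rec, i4]
      simp only [i2, mul_add, mul_sub, smul_sub, Finset.sum_sub_distrib]
      rw [sum_phi_ac ST hφ a (fun c => EkT ST R (k+1) c), add_right_comm, ← add_sub_assoc,
        cancelA ST hφ hR, phi_a0 ST hφ, G_rec ST hR (k+1) (by omega), E_rec ST hR (k+1)]
      have : hl ST 1 a
        = ∑ j : Ind m n, ((-1 : ℂ) ^ (pI a * pI j)) • (dd ST j * ST.inU (gen pI a j)) := by
        simp only [hl, rr, rElt_one]
      rw [← this, mul_sub, mul_add, sub_mul, mul_assoc]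
      abel
    · rw [phi_rec, i3]
      simp only [i1, mul_add, smul_add, Finset.sum_add_distrib]
      rw [← add_assoc, cancel0 ST hφ, F_rec ST hR (k+1)]
      simp only [hφ.2.2.1, tdel_z0]
    · rw [phi_rec, i4]
      simp only [i2, mul_add, mul_sub, smul_sub, Finset.sum_sub_distrib]
      rw [add_right_comm, ← add_sub_assoc, cancel0 ST hφ, hφ.2.2.2, G_rec ST hR (k+1) (by omega)]
      simp only [hφ.2.2.1, tdel_z0]
      rw [add_mul (qq ST z0), ← pow_succ']
      abel

end st

theorem main18 (m n : ℕ) (ST : SuperTensor m n) (R : ST.T)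
    (hR : R ∈ Subalgebra.center ℂ ST.T)
    (φ : UEA (Ind (m+1) n) pI →ₐ[ℂ] ST.T) (hφ : IsPhi ST R φ)
    (k : ℕ) (hk : 0 < k) (a b : Ind m n) :
    (φ (rElt (gen pI) pI k (emb a) (emb b)) = FkT ST R k (emb a) b + DkT ST R k a b) ∧
    (φ (rElt (gen pI) pI k (emb a) z0) =
      AkT ST R k 1 * ST.inD (tdel (emb a) z0) - EkT ST R k a
        - ST.inD (tdiv a) * ∑ s ∈ Finset.Icc 2 k, AkT ST R k s * BT ST s) ∧
    (φ (rElt (gen pI) pI k z0 (emb b)) = FkT ST R k z0 b) ∧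
    (φ (rElt (gen pI) pI k z0 z0) =
      AkT ST R k 1 * ST.inD (tdel (m := m) (n := n) z0 z0) + R ^ k
        - ∑ s ∈ Finset.Icc 2 k, AkT ST R k s * BT ST s) := by
  have hR' : ∀ x, Commute R x := fun x => ((Subalgebra.mem_center_iff.1 hR) x).symm
  obtain ⟨k, rfl⟩ := Nat.exists_eq_add_of_le' hk
  obtain ⟨h1, h2, h3, h4⟩ := main_all ST hφ hR' k
  refine ⟨?_, ?_, h3 b, ?_⟩
  · rw [h1, Fk_eq]
  · rw [h2, GkT, tdel_emb, map_mul, mul_sub, ← mul_assoc, ← mul_assoc,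
      (Ak_comm ST hR' (k+1) 1 (dd ST a)).eq]
    abel
  · rw [h4, GkT, tdel_z0]
    abel

/-- Theorem B.1.  Explicit formulas for the images under `φ_R` of the
elements `r_k^{gl(m+1|n)}(a,b)`, `a, b ∈ Î`. -/
theorem stmt18 (m n : ℕ) (ST : SuperTensor m n) (R : ST.T)
    (hR : R ∈ Subalgebra.center ℂ ST.T)
    (φ : UEA (Ind (m+1) n) pI →ₐ[ℂ] ST.T) (hφ : IsPhi ST R φ)
    (k : ℕ) (hk : 0 < k) (a b : Ind m n) :
    (φ (rElt (gen pI) pI k (emb a) (emb b)) = FkT ST R k (emb a) b + DkT ST R k a b) ∧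
    (φ (rElt (gen pI) pI k (emb a) z0) =
      AkT ST R k 1 * ST.inD (tdel (emb a) z0) - EkT ST R k a
        - ST.inD (tdiv a) * ∑ s ∈ Finset.Icc 2 k, AkT ST R k s * BT ST s) ∧
    (φ (rElt (gen pI) pI k z0 (emb b)) = FkT ST R k z0 b) ∧
    (φ (rElt (gen pI) pI k z0 z0) =
      AkT ST R k 1 * ST.inD (tdel (m := m) (n := n) z0 z0) + R ^ k
        - ∑ s ∈ Finset.Icc 2 k, AkT ST R k s * BT ST s) := by
  exact main18 m n ST R hR φ hφ k hk a b
end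
end
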